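/- Let k ≥ 3 be an integer with k ∉ {4,5}. For all sufficiently large n, if G is an n-vertex W_{2k+1}-free simple graph attaining the maximum spectral radius among all n-vertex W_{2k+1}-free graphs, V(G) = L ⊔ R is a maximum cut of G, and L contains a vertex of internal degree k − 1, then there are at least 4k² + 1 vertices v ∈ L with d_L(v) = k − 1, and the induced subgraph G[R] contains at most one edge. -/

import Mathlib

/-- The wheel graph on `t` vertices: vertex `0` joined to every vertex of the
cycle `1, 2, …, t-1` (with `t-1` adjacent to `1`). -/
def wheelGraph (t : ℕ) : SimpleGraph (Fin t) where
  Adj a b := a ≠ b ∧ (a.val = 0 ∨ b.val = 0 ∨ a.val + 1 = b.val ∨ b.val + 1 = a.val ∨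
      (a.val = 1 ∧ b.val = t - 1) ∨ (b.val = 1 ∧ a.val = t - 1))
  symm := by
    constructor
    intro a b h
    exact ⟨h.1.symm, by tauto⟩
  loopless := by
    constructor
    intro a h
    exact h.1 rfl

/-- `G` contains a copy of `F`, i.e. a subgraph isomorphic to `F`. -/
def ContainsCopy {α β : Type*} (F : SimpleGraph α) (G : SimpleGraph β) : Prop :=
  ∃ f : α ↪ β, ∀ a b, F.Adj a b → G.Adj (f a) (f b)

/-- `G` is `W_t`-free: it contains no subgraph isomorphic to the wheel on `t` vertices. -/
def WheelFree (t : ℕ) {n : ℕ} (G : SimpleGraph (Fin n)) : Prop :=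
  ¬ ContainsCopy (wheelGraph t) G

/-- The spectral radius of `G`: the largest eigenvalue of its adjacency matrix. -/
noncomputable def lam1 {n : ℕ} (G : SimpleGraph (Fin n)) : ℝ := by
  classical
  exact sSup {μ : ℝ | Module.End.HasEigenvalue (Matrix.toLin' (G.adjMatrix ℝ)) μ}

/-- The number of edges of a graph on a finite vertex type. -/
noncomputable def edgeCount {V : Type*} [Fintype V] (G : SimpleGraph V) : ℕ := by
  classical
  exact G.edgeFinset.card

/-- The degree of a vertex. -/
noncomputable def deg {n : ℕ} (G : SimpleGraph (Fin n)) (v : Fin n) : ℕ := by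
  classical
  exact G.degree v

/-- The number of neighbours of `v` inside the set `A`. -/
noncomputable def degIn {n : ℕ} (G : SimpleGraph (Fin n)) (A : Finset (Fin n)) (v : Fin n) : ℕ := by
  classical
  exact (A.filter fun u => G.Adj v u).card

/-- The number of edges of `G` with one endpoint in `S` and the other outside `S`. -/
noncomputable def cutCount {n : ℕ} (G : SimpleGraph (Fin n)) (S : Finset (Fin n)) : ℕ := by
  classical
  exact ((Finset.univ : Finset (Fin n × Fin n)).filter
    fun p => G.Adj p.1 p.2 ∧ p.1 ∈ S ∧ p.2 ∉ S).card

/-- `(S, T)` is a maximum cut of `G`. -/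
def IsMaxCut {n : ℕ} (G : SimpleGraph (Fin n)) (S T : Finset (Fin n)) : Prop :=
  T = Sᶜ ∧ ∀ S' : Finset (Fin n), cutCount G S' ≤ cutCount G S

/-- `G` attains the maximum spectral radius among all `n`-vertex `W_t`-free graphs. -/
def IsSpexWheel (t : ℕ) {n : ℕ} (G : SimpleGraph (Fin n)) : Prop :=
  WheelFree t G ∧ ∀ H : SimpleGraph (Fin n), WheelFree t H → lam1 H ≤ lam1 G

/-- `G` attains the maximum number of edges among all `n`-vertex `W_t`-free graphs. -/
def IsExWheel (t : ℕ) {n : ℕ} (G : SimpleGraph (Fin n)) : Prop :=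
  WheelFree t G ∧ ∀ H : SimpleGraph (Fin n), WheelFree t H → edgeCount H ≤ edgeCount G

/-!
A `W_{2k+1}`-free graph has few edges inside any neighbourhood, since `k` neighbours of `v` with `k`
common neighbours in `N(v)` already give a wheel with hub `v`. Hence, for the extremal graph `G`,
whose spectral radius `λ` is at least `(n - 1) / 2`, the bound `λ² ≤ ∑_{v ∼ u} d(v)` at a maximum
entry `u` of the Perron vector makes every maximum cut almost a balanced complete bipartite graph.
Reattaching a vertex to the typical vertices of one side cannot increase `λ`, so all entries of the
Perron vector are close to `1`, and then every vertex is joined to almost all of the other side.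

Consequently internal degrees are at most `k - 1`. If `v ∈ L` has internal degree `k - 1`, then the
common neighbourhood `C` in `R` of `v` and its internal neighbours spans at most one edge: two edges
would give a rim of `k - 1` internal neighbours and `k + 1` vertices of `C` around the hub `v`. One
such vertex therefore forces `R` to span few edges. Comparing `λ` with that of the complete
bipartite graph on `(L, R)` with `L` filled by disjoint copies of `K_k`, the vertices of `L` must
have average internal degree close to `k - 1`, so that at least `n / 4` of them attain it. Any two
edges of `R` lie in the set `C` of one of these vertices, and so coincide.
-/

open Finset Filter
open scoped Classical Matrix

variable {V : Type*} {n k : ℕ}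

section Wheels

variable {G : SimpleGraph V} {v : V}

lemma containsCopy_wheelGraph_of_isChain {a : V} {l : List V} (hv : ∀ x ∈ a :: l, G.Adj v x)
    (hnd : (a :: l).Nodup) (hl : (a :: (l ++ [a])).IsChain G.Adj) :
    ContainsCopy (wheelGraph (l.length + 2)) G := by
  have hinj : Function.Injective (Fin.cons v (a :: l).get : Fin (l.length + 2) → V) :=
    Fin.cons_injective_iff.2 ⟨by rintro ⟨i, hi⟩; exact (hv _ (List.get_mem (a :: l) i)).ne hi.symm,
      List.nodup_iff_injective_get.1 hnd⟩
  refine ⟨⟨_, hinj⟩, fun i j hij => ?_⟩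
  have hhub (j : Fin (l.length + 1)) : G.Adj v ((a :: l).get j) :=
    hv _ (List.get_mem (a :: l) j)
  have hstep (i j : Fin (l.length + 1)) (h : i.val + 1 = j.val) :
      G.Adj ((a :: l).get i) ((a :: l).get j) := by
    obtain ⟨j, hj⟩ := j
    obtain rfl : i.val + 1 = j := h
    have := List.isChain_iff_getElem.1 (List.IsChain.left_of_append (l₁ := a :: l) hl) i.val hj
    simpa using this
  have hclose (i j : Fin (l.length + 1)) (hi : i.val = 0) (hj : j.val = l.length) :
      G.Adj ((a :: l).get j) ((a :: l).get i) := by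
    have := List.isChain_iff_getElem.1 hl l.length (by simp)
    obtain ⟨i, _⟩ := i
    obtain ⟨j, _⟩ := j
    obtain rfl : i = 0 := hi
    obtain rfl : j = l.length := hj
    grind
  cases i using Fin.cases <;> cases j using Fin.cases
  · exact absurd rfl hij.1
  · exact hhub _
  · exact (hhub _).symm
  · obtain ⟨-, h | h | h | h | ⟨hi, hj⟩ | ⟨hj, hi⟩⟩ := hij
    · simp at h
    · simp at h
    · exact hstep _ _ (by simpa using h)
    · exact (hstep _ _ (by simpa using h)).symm
    · exact (hclose _ _ (by simpa using hi) (by simpa using hj)).symm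
    · exact hclose _ _ (by simpa using hj) (by simpa using hi)

variable [DecidableEq V]

lemma exists_alternating_path (m : ℕ) {A B : Finset V} {b : V} (hA : m ≤ #A) (hB : m ≤ #B)
    (hAB : ∀ x ∈ A, ∀ y ∈ insert b B, G.Adj x y) :
    ∃ l : List V, l.length = 2 * m ∧ l.Nodup ∧ (∀ x ∈ l, x ∈ A ∪ B) ∧
      (b :: l).IsChain G.Adj ∧ (b :: l).getLast (List.cons_ne_nil b l) ∈ insert b B := by
  induction m generalizing A B b with
  | zero => exact ⟨[], by simp⟩
  | succ m ih =>
    obtain ⟨a, ha⟩ := card_pos.1 (Nat.zero_lt_of_lt hA)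
    obtain ⟨c, hc⟩ := card_pos.1 (Nat.zero_lt_of_lt hB)
    obtain ⟨l, hlen, hnd, hmem, hchain, hlast⟩ := ih (A := A.erase a) (B := B.erase c) (b := c)
      (by rw [card_erase_of_mem ha]; lia) (by rw [card_erase_of_mem hc]; lia)
      (fun x hx y hy => hAB x (mem_of_mem_erase hx) y
        (mem_insert_of_mem (by rwa [insert_erase hc] at hy)))
    have haB : a ∉ B := fun h => (hAB a ha a (mem_insert_of_mem h)).ne rfl
    have hcA : c ∉ A := fun h => (hAB c h c (mem_insert_of_mem hc)).ne rfl
    refine ⟨a :: c :: l, by simp only [List.length_cons, hlen]; ring, ?_, ?_, ?_, ?_⟩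
    · grind
    · grind
    · have hab := (hAB a ha b (mem_insert_self b B)).symm
      exact .cons_cons hab (.cons_cons (hAB a ha c (mem_insert_of_mem hc)) hchain)
    · rw [insert_erase hc] at hlast
      exact mem_insert_of_mem hlast

lemma containsCopy_wheelGraph_of_prefix {t : ℕ} (m : ℕ) {A B : Finset V} {a b : V} {w : List V}
    (ht : t = w.length + 2 * m + 3) (hA : m ≤ #A) (hB : m ≤ #B)
    (hAB : ∀ x ∈ A, ∀ y ∈ insert b B, G.Adj x y) (haB : ∀ y ∈ insert b B, G.Adj a y)
    (hv : ∀ x ∈ A ∪ B, G.Adj v x) (hvw : ∀ x ∈ a :: (w ++ [b]), G.Adj v x)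
    (hnd : (a :: (w ++ [b])).Nodup) (hchain : (a :: (w ++ [b])).IsChain G.Adj)
    (hdisj : ∀ x ∈ a :: (w ++ [b]), x ∉ A ∪ B) : ContainsCopy (wheelGraph t) G := by
  obtain ⟨l, hlen, hlnd, hlmem, hl, hlast⟩ := exists_alternating_path m hA hB hAB
  have hrim : (a :: w ++ b :: (l ++ [a])).IsChain G.Adj := by
    refine List.isChain_split.2 ⟨hchain, (List.IsChain.append hl (.singleton a) ?_ :
      (b :: l ++ [a]).IsChain G.Adj)⟩
    intro x hx y hy
    rw [List.getLast?_eq_getLast_of_ne_nil (List.cons_ne_nil b l), Option.mem_some_iff] at hx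
    obtain rfl : a = y := by simpa using hy
    exact (haB x (hx ▸ hlast)).symm
  have hnd' : (a :: (w ++ b :: l)).Nodup := by
    have : a :: (w ++ b :: l) = a :: (w ++ [b]) ++ l := by simp
    rw [this]
    exact hnd.append hlnd fun x hx hxl => hdisj x hx (hlmem x hxl)
  have hvr : ∀ x ∈ a :: (w ++ b :: l), G.Adj v x := by
    intro x hx
    have : x ∈ a :: (w ++ [b]) ∨ x ∈ l := by simp at hx ⊢; tauto
    exact this.elim (hvw x) fun h => hv x (hlmem x h)
  obtain rfl : t = (w ++ b :: l).length + 2 := by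
    simp only [List.length_append, List.length_cons, hlen]
    lia
  exact containsCopy_wheelGraph_of_isChain hvr hnd' (by simpa using hrim)

lemma containsCopy_wheelGraph_of_biclique {A B : Finset V} (hk : k ≠ 0) (hA : k ≤ #A)
    (hB : k ≤ #B) (hAB : ∀ x ∈ A, ∀ y ∈ B, G.Adj x y) (hv : ∀ x ∈ A ∪ B, G.Adj v x) :
    ContainsCopy (wheelGraph (2 * k + 1)) G := by
  obtain ⟨a, ha⟩ := card_pos.1 (by lia : 0 < #A)
  obtain ⟨b, hb⟩ := card_pos.1 (by lia : 0 < #B)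
  have haB : a ∉ B := fun h => (hAB a ha a h).ne rfl
  have hbA : b ∉ A := fun h => (hAB b h b hb).ne rfl
  refine containsCopy_wheelGraph_of_prefix (k - 1) (A := A.erase a) (B := B.erase b) (a := a)
    (b := b) (w := []) (v := v) (by simp only [List.length_nil]; lia)
    (by rw [card_erase_of_mem ha]; lia) (by rw [card_erase_of_mem hb]; lia) ?_ ?_ ?_ ?_ ?_ ?_ ?_
  · exact fun x hx y hy => hAB x (mem_of_mem_erase hx) y (by rwa [insert_erase hb] at hy)
  · exact fun y hy => hAB a ha y (by rwa [insert_erase hb] at hy)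
  · exact fun x hx => hv x (union_subset_union (erase_subset _ _) (erase_subset _ _) hx)
  · simpa using ⟨hv a (mem_union_left _ ha), hv b (mem_union_right _ hb)⟩
  · simpa using (hAB a ha b hb).ne
  · simpa using hAB a ha b hb
  · simp [haB, hbA]

lemma containsCopy_wheelGraph_of_perm {T C : Finset V} {p q r s t₀ t₁ : V} {w : List V}
    (hk : 3 ≤ k) (hT : k ≤ #T + 1) (hC : k + 1 ≤ #C) (hTC : ∀ x ∈ T, ∀ y ∈ C, G.Adj x y)
    (hv : ∀ x ∈ T ∪ C, G.Adj v x) (hpqrs : [p, q, r, s].Nodup) (hCm : ∀ x ∈ [p, q, r, s], x ∈ C)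
    (ht : t₀ ≠ t₁) (ht₀ : t₀ ∈ T) (ht₁ : t₁ ∈ T)
    (hw : (p :: (w ++ [t₁])).Perm [p, q, r, s, t₀, t₁])
    (hchain : (p :: (w ++ [t₁])).IsChain G.Adj) : ContainsCopy (wheelGraph (2 * k + 1)) G := by
  have hne : ∀ x ∈ T, ∀ y ∈ C, x ≠ y := fun x hx y hy => (hTC x hx y hy).ne
  have hcard4 : #({p, q, r, s} : Finset V) ≤ 4 := card_le_four
  have hcard2 : #({t₀, t₁} : Finset V) ≤ 2 := card_le_two
  have hp : p ∈ C := hCm p (by simp)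
  have hlen : w.length = 4 := by simpa using hw.length_eq
  refine containsCopy_wheelGraph_of_prefix (k - 3) (A := C \ {p, q, r, s}) (B := T \ {t₀, t₁})
    (a := p) (b := t₁) (w := w) (v := v) (by lia) ?_ ?_ ?_ ?_ ?_ ?_ ?_ hchain ?_
  · exact le_trans (by lia) (le_card_sdiff _ _)
  · exact le_trans (by lia) (le_card_sdiff _ _)
  · grind [G.adj_comm]
  · grind [G.adj_comm]
  · grind
  · grind
  · grind
  · grind

lemma containsCopy_wheelGraph_of_two_edges {T C : Finset V} {p q r s : V} (hk : 3 ≤ k)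
    (hT : k ≤ #T + 1) (hC : k + 1 ≤ #C) (hTC : ∀ x ∈ T, ∀ y ∈ C, G.Adj x y)
    (hv : ∀ x ∈ T ∪ C, G.Adj v x) (hp : p ∈ C) (hq : q ∈ C) (hr : r ∈ C) (hs : s ∈ C)
    (hpq : G.Adj p q) (hrs : G.Adj r s) (hne : s(p, q) ≠ s(r, s)) :
    ContainsCopy (wheelGraph (2 * k + 1)) G := by
  obtain ⟨t₀, ht₀, t₁, ht₁, ht⟩ := one_lt_card.1 (by lia : 1 < #T)
  have hpath {p q r : V} (hp : p ∈ C) (hq : q ∈ C) (hr : r ∈ C) (hpq : G.Adj p q)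
      (hqr : G.Adj q r) (hpr : p ≠ r) : ContainsCopy (wheelGraph (2 * k + 1)) G := by
    obtain ⟨s, hs, hs'⟩ := exists_mem_notMem_of_card_lt_card
      (card_le_three.trans_lt (by lia) : #({p, q, r} : Finset V) < #C)
    refine containsCopy_wheelGraph_of_perm (p := p) (q := q) (r := r) (s := s) (t₀ := t₀) (t₁ := t₁)
      (w := [q, r, t₀, s]) hk hT hC hTC hv ?_ ?_ ht ht₀ ht₁ ?_ ?_
    · grind [hpq.ne, hqr.ne]
    · grind
    · grind
    · simp [hpq, hqr, (hTC t₀ ht₀ r hr).symm, hTC t₀ ht₀ s hs, (hTC t₁ ht₁ s hs).symm]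
  by_cases hpr : p = r
  · subst hpr
    exact hpath hq hp hs hpq.symm hrs (by rintro rfl; exact hne rfl)
  by_cases hps : p = s
  · subst hps
    exact hpath hq hp hr hpq.symm hrs.symm (by rintro rfl; exact hne Sym2.eq_swap)
  by_cases hqr : q = r
  · subst hqr
    exact hpath hp hq hs hpq hrs hps
  by_cases hqs : q = s
  · subst hqs
    exact hpath hp hq hr hpq hrs.symm hpr
  refine containsCopy_wheelGraph_of_perm (p := p) (q := q) (r := r) (s := s) (t₀ := t₀) (t₁ := t₁)
    (w := [q, t₀, r, s]) hk hT hC hTC hv ?_ ?_ ht ht₀ ht₁ ?_ ?_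
  · grind [hpq.ne, hrs.ne]
  · grind
  · grind
  · simp [hpq, hrs, (hTC t₀ ht₀ q hq).symm, hTC t₀ ht₀ r hr, (hTC t₁ ht₁ s hs).symm]

end Wheels

section Zarankiewicz

variable {α β : Type*} {r : α → β → Prop} {s : Finset α} {t : Finset β} {l : ℕ}

lemma sum_choose_le_of_card_common_le
    (h : ∀ A ∈ s.powersetCard k, #{y ∈ t | ∀ x ∈ A, r x y} ≤ l) :
    ∑ y ∈ t, (#{x ∈ s | r x y}).choose k ≤ (#s).choose k * l := by
  calc ∑ y ∈ t, (#{x ∈ s | r x y}).choose k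
      = ∑ y ∈ t, #{A ∈ s.powersetCard k | ∀ x ∈ A, r x y} := by
        refine sum_congr rfl fun y _ => ?_
        rw [← card_powersetCard]
        congr 1
        grind
    _ = ∑ A ∈ s.powersetCard k, #{y ∈ t | ∀ x ∈ A, r x y} :=
        (sum_card_bipartiteAbove_eq_sum_card_bipartiteBelow fun A y => ∀ x ∈ A, r x y).symm
    _ ≤ #(s.powersetCard k) • l := sum_le_card_nsmul _ _ _ h
    _ = (#s).choose k * l := by rw [card_powersetCard, smul_eq_mul]

lemma pow_sum_card_le_of_card_common_le (hk : k ≠ 0)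
    (h : ∀ A ∈ s.powersetCard k, #{y ∈ t | ∀ x ∈ A, r x y} ≤ l) :
    (∑ y ∈ t, (#{x ∈ s | r x y} + 1 - k)) ^ k ≤ #t ^ (k - 1) * (#s ^ k * l) := by
  obtain ⟨j, rfl⟩ := Nat.exists_eq_succ_of_ne_zero hk
  have hfac : (0 : ℚ) < (j + 1).factorial := by exact_mod_cast Nat.factorial_pos _
  have hsum : ∑ y ∈ t, ((#{x ∈ s | r x y} + 1 - (j + 1) : ℕ) : ℚ) ^ (j + 1) ≤ #s ^ (j + 1) * l := by
    rw [← div_le_div_iff_of_pos_right hfac, sum_div]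
    calc ∑ y ∈ t, ((#{x ∈ s | r x y} + 1 - (j + 1) : ℕ) : ℚ) ^ (j + 1) / (j + 1).factorial
        ≤ ∑ y ∈ t, ((#{x ∈ s | r x y}).choose (j + 1) : ℚ) :=
          sum_le_sum fun y _ => Nat.pow_le_choose _ _
      _ ≤ (#s).choose (j + 1) * l := by exact_mod_cast sum_choose_le_of_card_common_le h
      _ ≤ #s ^ (j + 1) / (j + 1).factorial * l := by
          gcongr
          exact Nat.choose_le_pow_div _ _
      _ = #s ^ (j + 1) * l / (j + 1).factorial := by ring
  have hmean := pow_sum_le_card_mul_sum_pow (s := t)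
    (f := fun y => ((#{x ∈ s | r x y} + 1 - (j + 1) : ℕ) : ℚ)) (fun _ _ => Nat.cast_nonneg _) j
  rw [Nat.succ_eq_add_one, Nat.add_sub_cancel]
  exact_mod_cast hmean.trans (mul_le_mul_of_nonneg_left hsum (by positivity))

end Zarankiewicz

section WheelFree

lemma WheelFree.card_common_le {G : SimpleGraph (Fin n)} (hG : WheelFree (2 * k + 1) G) (hk : k ≠ 0)
    {v : Fin n} {A : Finset (Fin n)} (hA : A ∈ (G.neighborFinset v).powersetCard k) :
    #{y ∈ G.neighborFinset v | ∀ x ∈ A, G.Adj y x} ≤ k := by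
  obtain ⟨hAv, hAk⟩ := mem_powersetCard.1 hA
  by_contra! hlt
  refine hG (containsCopy_wheelGraph_of_biclique hk hAk.ge hlt.le
    (fun x hx y hy => ((mem_filter.1 hy).2 x hx).symm) (v := v) fun x hx => ?_)
  exact (G.mem_neighborFinset v x).1
    ((mem_union.1 hx).elim (fun h => hAv h) fun h => (mem_filter.1 h).1)

lemma eventually_sum_degIn_neighborFinset_le (hk : k ≠ 0) {ε : ℝ} (hε : 0 < ε) :
    ∀ᶠ n : ℕ in atTop, ∀ G : SimpleGraph (Fin n), WheelFree (2 * k + 1) G → ∀ v : Fin n,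
      ∑ y ∈ G.neighborFinset v, (degIn G (G.neighborFinset v) y : ℝ) ≤ ε * n ^ 2 := by
  have hN := (tendsto_natCast_atTop_atTop (R := ℝ)).eventually_ge_atTop
  filter_upwards [hN (2 * k / ε), hN (k / (ε / 2) ^ k), eventually_gt_atTop 0]
    with n hn₁ hn₂ hn G hG v
  rw [div_le_iff₀ (by positivity)] at hn₁ hn₂
  set S := G.neighborFinset v
  have hS : #S ≤ n := card_finset_fin_le S
  set X := ∑ y ∈ S, (degIn G S y + 1 - k)
  have hX : X ^ k ≤ #S ^ (k - 1) * (#S ^ k * k) :=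
    pow_sum_card_le_of_card_common_le (r := fun x y => G.Adj y x) hk fun A hA =>
      by convert hG.card_common_le hk hA
  have hXn : X ^ k * n ≤ k * (n ^ 2) ^ k :=
    calc X ^ k * n ≤ n ^ (k - 1) * (n ^ k * k) * n := by
          gcongr
          exact hX.trans (by gcongr)
      _ = k * n ^ k * (n ^ (k - 1) * n) := by ring
      _ = k * (n ^ 2) ^ k := by rw [pow_sub_one_mul hk]; ring
  have hXε : (X : ℝ) ≤ ε / 2 * n ^ 2 := by
    refine le_of_pow_le_pow_left₀ hk (by positivity) (le_of_mul_le_mul_right ?_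
      (Nat.cast_pos (α := ℝ).2 hn))
    calc (X : ℝ) ^ k * n ≤ k * (n ^ 2) ^ k := by exact_mod_cast hXn
      _ ≤ n * (ε / 2) ^ k * (n ^ 2) ^ k := by gcongr
      _ = (ε / 2 * n ^ 2) ^ k * n := by rw [mul_pow]; ring
  have hle : ∑ y ∈ S, degIn G S y ≤ X + #S * k := by
    rw [← smul_eq_mul, ← sum_const, ← sum_add_distrib]
    exact sum_le_sum fun y _ => by lia
  calc ∑ y ∈ S, (degIn G S y : ℝ) ≤ X + #S * k := by exact_mod_cast hle
    _ ≤ ε / 2 * n ^ 2 + n * k := by gcongr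
    _ ≤ ε * n ^ 2 := by nlinarith

end WheelFree

section SpectralRadius

variable {ι : Type*} [Fintype ι] [DecidableEq ι] {A : Matrix ι ι ℝ}

open Matrix

lemma posSemidef_sSup_spectrum_smul_sub (hA : A.IsHermitian) :
    (sSup (spectrum ℝ A) • (1 : Matrix ι ι ℝ) - A).PosSemidef := by
  refine posSemidef_iff_isHermitian_and_spectrum_nonneg.2
    ⟨(isHermitian_one.smul (IsSelfAdjoint.all _)).sub hA, ?_⟩
  rw [← Algebra.algebraMap_eq_smul_one, ← spectrum.singleton_sub_eq]
  rintro _ ⟨_, rfl, μ, hμ, rfl⟩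
  exact sub_nonneg.2 (le_csSup A.finite_spectrum.bddAbove hμ)

lemma dotProduct_mulVec_le_sSup_spectrum_mul (hA : A.IsHermitian) (x : ι → ℝ) :
    x ⬝ᵥ (A *ᵥ x) ≤ sSup (spectrum ℝ A) * (x ⬝ᵥ x) := by
  have := (posSemidef_sSup_spectrum_smul_sub hA).dotProduct_mulVec_nonneg x
  rw [star_trivial, sub_mulVec, smul_mulVec, one_mulVec, dotProduct_sub, dotProduct_smul,
    smul_eq_mul] at this
  linarith

lemma exists_mulVec_eq_sSup_spectrum_smul [Nonempty ι] (hA : A.IsHermitian) :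
    ∃ x : ι → ℝ, x ≠ 0 ∧ A *ᵥ x = sSup (spectrum ℝ A) • x := by
  have hne : (spectrum ℝ A).Nonempty :=
    hA.spectrum_real_eq_range_eigenvalues ▸ Set.range_nonempty _
  have hmem := hne.csSup_mem A.finite_spectrum
  rw [← spectrum_toLin', ← Module.End.hasEigenvalue_iff_mem_spectrum] at hmem
  obtain ⟨x, hx⟩ := hmem.exists_hasEigenvector
  exact ⟨x, hx.2, by rw [← toLin'_apply, hx.apply_eq_smul, spectrum_toLin']⟩

/-- Replacing a top eigenvector by its entrywise absolute value does not decrease the quadratic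
form, so the absolute value is again a maximiser and hence an eigenvector. -/
lemma exists_nonneg_mulVec_eq_sSup_spectrum_smul [Nonempty ι] (hA : A.IsHermitian)
    (hpos : ∀ i j, 0 ≤ A i j) :
    ∃ x : ι → ℝ, x ≠ 0 ∧ 0 ≤ x ∧ A *ᵥ x = sSup (spectrum ℝ A) • x := by
  obtain ⟨y, hy, hAy⟩ := exists_mulVec_eq_sSup_spectrum_smul hA
  refine ⟨|y|, fun h => hy (funext fun i => abs_eq_zero.1 (congrFun h i)), abs_nonneg y, ?_⟩
  set M := sSup (spectrum ℝ A)
  have habs : |y| ⬝ᵥ |y| = y ⬝ᵥ y := sum_congr rfl fun i _ => abs_mul_abs_self (y i)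
  have hle : y ⬝ᵥ (A *ᵥ y) ≤ |y| ⬝ᵥ (A *ᵥ |y|) := by
    simp only [dotProduct, mulVec, mul_sum, Pi.abs_apply]
    refine sum_le_sum fun i _ => sum_le_sum fun j _ => ?_
    calc y i * (A i j * y j) ≤ |y i * (A i j * y j)| := le_abs_self _
      _ = |y i| * (A i j * |y j|) := by rw [abs_mul, abs_mul, abs_of_nonneg (hpos i j)]
  have hform : |y| ⬝ᵥ (A *ᵥ |y|) = M * (|y| ⬝ᵥ |y|) := by
    refine (dotProduct_mulVec_le_sSup_spectrum_mul hA _).antisymm ?_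
    rwa [hAy, dotProduct_smul, smul_eq_mul, ← habs] at hle
  have hker := ((posSemidef_sSup_spectrum_smul_sub hA).dotProduct_mulVec_zero_iff |y|).1 (by
    rw [star_trivial, sub_mulVec, smul_mulVec, one_mulVec, dotProduct_sub, dotProduct_smul,
      smul_eq_mul, hform, sub_self])
  rw [sub_mulVec, smul_mulVec, one_mulVec, sub_eq_zero] at hker
  exact hker.symm

lemma lam1_eq_sSup_spectrum (G : SimpleGraph (Fin n)) :
    lam1 G = sSup (spectrum ℝ (G.adjMatrix ℝ)) := by
  rw [← spectrum_toLin']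
  exact congrArg sSup (Set.ext fun μ => Module.End.hasEigenvalue_iff_mem_spectrum)

/-- The quadratic form `∑_{ij} A_{ij} x_i x_j` of the adjacency matrix of `G`. -/
noncomputable def adjForm [Fintype V] (G : SimpleGraph V) (x : V → ℝ) : ℝ :=
  x ⬝ᵥ (G.adjMatrix ℝ *ᵥ x)

lemma adjForm_eq_sum [Fintype V] (G : SimpleGraph V) (x : V → ℝ) :
    adjForm G x = ∑ i, ∑ j, if G.Adj i j then x i * x j else 0 :=
  G.dotProduct_mulVec_adjMatrix x x

lemma adjForm_le (G : SimpleGraph (Fin n)) (x : Fin n → ℝ) : adjForm G x ≤ lam1 G * (x ⬝ᵥ x) := by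
  rw [lam1_eq_sSup_spectrum]
  exact dotProduct_mulVec_le_sSup_spectrum_mul (G.isHermitian_adjMatrix ℝ) x

/-- A nonnegative eigenvector of `G` for its spectral radius, scaled to have maximum entry `1`. -/
structure IsPerronVector (G : SimpleGraph (Fin n)) (x : Fin n → ℝ) : Prop where
  nonneg : ∀ v, 0 ≤ x v
  le_one : ∀ v, x v ≤ 1
  exists_eq_one : ∃ u, x u = 1
  sum_neighborFinset : ∀ v, ∑ w ∈ G.neighborFinset v, x w = lam1 G * x v

lemma exists_isPerronVector [NeZero n] (G : SimpleGraph (Fin n)) : ∃ x, IsPerronVector G x := by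
  obtain ⟨x, hx, hx₀, hGx⟩ := exists_nonneg_mulVec_eq_sSup_spectrum_smul (G.isHermitian_adjMatrix ℝ)
    fun i j => by rw [SimpleGraph.adjMatrix_apply]; positivity
  obtain ⟨u, -, hu⟩ := exists_max_image univ x univ_nonempty
  have hxu : 0 < x u := by
    obtain ⟨v, hv⟩ := Function.ne_iff.1 hx
    exact ((hx₀ v).lt_of_ne' hv).trans_le (hu v (mem_univ v))
  refine ⟨fun v => x v / x u, fun v => div_nonneg (hx₀ v) hxu.le,
    fun v => (div_le_one hxu).2 (hu v (mem_univ v)), ⟨u, div_self hxu.ne'⟩, fun v => ?_⟩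
  rw [← sum_div, ← SimpleGraph.adjMatrix_mulVec_apply, hGx, lam1_eq_sSup_spectrum, Pi.smul_apply,
    smul_eq_mul, mul_div_assoc]

lemma IsPerronVector.adjForm_eq {G : SimpleGraph (Fin n)} {x : Fin n → ℝ}
    (hx : IsPerronVector G x) : adjForm G x = lam1 G * (x ⬝ᵥ x) := by
  have : G.adjMatrix ℝ *ᵥ x = lam1 G • x := funext fun v => by
    rw [SimpleGraph.adjMatrix_mulVec_apply, hx.sum_neighborFinset v, Pi.smul_apply, smul_eq_mul]
  rw [adjForm, this, dotProduct_smul, smul_eq_mul]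

end SpectralRadius

section Reattach

/-- The graph obtained from `G` by removing all edges at `v` and then joining `v` to the vertices
of `Q`. -/
def reattach (G : SimpleGraph V) (v : V) (Q : Finset V) : SimpleGraph V :=
  G.deleteIncidenceSet v ⊔ SimpleGraph.fromRel fun a b => a = v ∧ b ∈ Q

lemma reattach_adj {G : SimpleGraph V} {v a b : V} {Q : Finset V} : (reattach G v Q).Adj a b ↔
    a ≠ b ∧ (G.Adj a b ∧ a ≠ v ∧ b ≠ v ∨ a = v ∧ b ∈ Q ∨ b = v ∧ a ∈ Q) := by
  rw [reattach, SimpleGraph.sup_adj, SimpleGraph.deleteIncidenceSet_adj, SimpleGraph.fromRel_adj]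
  have : G.Adj a b → a ≠ b := SimpleGraph.Adj.ne
  tauto

lemma deleteIncidenceSet_reattach (G : SimpleGraph V) (v : V) (Q : Finset V) :
    (reattach G v Q).deleteIncidenceSet v = G.deleteIncidenceSet v := by
  ext a b
  simp only [SimpleGraph.deleteIncidenceSet_adj, reattach_adj]
  have : G.Adj a b → a ≠ b := SimpleGraph.Adj.ne
  tauto

-- In a copy of `F` through `v`, some vertex of `G` off the copy can take over the role of `v`.
lemma not_containsCopy_reattach {α : Type*} [Fintype α] {F : SimpleGraph α} {G : SimpleGraph V}
    {v : V} {Q : Finset V} (hG : ¬ ContainsCopy F G)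
    (hQ : ∀ Z : Finset V, #Z ≤ Fintype.card α → ∃ u ∉ Z, ∀ q ∈ Z, q ∈ Q → G.Adj u q) :
    ¬ ContainsCopy F (reattach G v Q) := by
  rintro ⟨f, hf⟩
  obtain ⟨u, hu, huQ⟩ := hQ (univ.map f) (card_map f).le
  have hfu (a : α) : f a ≠ u := fun h => hu (h ▸ mem_map_of_mem f (mem_univ a))
  have hadj (a : α) (ha : f a ∈ Q) : G.Adj u (f a) := huQ _ (mem_map_of_mem f (mem_univ a)) ha
  refine hG ⟨⟨fun a => if f a = v then u else f a, ?_⟩, fun a b hab => ?_⟩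
  · intro a b hab
    exact f.injective (by grind)
  · change G.Adj (if f a = v then u else f a) (if f b = v then u else f b)
    obtain ⟨hne, ⟨h, ha, hb⟩ | ⟨ha, hb⟩ | ⟨hb, ha⟩⟩ := reattach_adj.1 (hf a b hab)
    · simpa [ha, hb] using h
    · simpa [ha, (ha ▸ hne).symm] using hadj b hb
    · simpa [hb, hb ▸ hne] using (hadj a ha).symm

variable [DecidableEq V]

lemma neighborFinset_reattach [Fintype V] (G : SimpleGraph V) (v : V) (Q : Finset V) :
    (reattach G v Q).neighborFinset v = Q.erase v := by
  ext w
  rw [SimpleGraph.mem_neighborFinset, reattach_adj, mem_erase]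
  tauto

lemma adjForm_update [Fintype V] (G : SimpleGraph V) (x : V → ℝ) (v : V) (τ : ℝ) :
    adjForm G (Function.update x v τ) =
      2 * τ * ∑ w ∈ G.neighborFinset v, x w + adjForm (G.deleteIncidenceSet v) x := by
  have hterm (i j : V) : (if G.Adj i j then
      Function.update x v τ i * Function.update x v τ j else 0) =
      (if i = v then if G.Adj v j then τ * x j else 0 else 0) +
      (if j = v then if G.Adj v i then τ * x i else 0 else 0) +
      if (G.deleteIncidenceSet v).Adj i j then x i * x j else 0 := by
    simp only [SimpleGraph.deleteIncidenceSet_adj, Function.update_apply, G.adj_comm v]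
    have := G.irrefl (v := v)
    grind [G.adj_comm]
  have hnbr : ∑ j, (if G.Adj v j then τ * x j else 0) = τ * ∑ w ∈ G.neighborFinset v, x w := by
    rw [mul_sum, ← sum_filter, SimpleGraph.neighborFinset_eq_filter]
  have hrest : adjForm (G.deleteIncidenceSet v) x =
      ∑ i, ∑ j, if (G.deleteIncidenceSet v).Adj i j then x i * x j else 0 := by
    convert adjForm_eq_sum _ x
  rw [adjForm_eq_sum, hrest]
  simp only [hterm, sum_add_distrib]
  rw [sum_comm (f := fun i j => if i = v then if G.Adj v j then τ * x j else 0 else 0)]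
  simp only [sum_ite_eq', mem_univ, if_true, hnbr]
  ring

lemma dotProduct_update_self [Fintype V] (x : V → ℝ) (v : V) (τ : ℝ) :
    Function.update x v τ ⬝ᵥ Function.update x v τ = x ⬝ᵥ x - x v ^ 2 + τ ^ 2 := by
  have hrest : ∑ i ∈ univ.erase v, Function.update x v τ i * Function.update x v τ i =
      ∑ i ∈ univ.erase v, x i * x i :=
    sum_congr rfl fun i hi => by rw [Function.update_of_ne (ne_of_mem_erase hi)]
  simp only [dotProduct, ← add_sum_erase univ _ (mem_univ v), Function.update_self, hrest]
  ring

lemma IsSpexWheel.sum_erase_le_lam1_mul {t : ℕ} {G : SimpleGraph (Fin n)} (hG : IsSpexWheel t G)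
    (hlam : 0 < lam1 G) {x : Fin n → ℝ} (hx : IsPerronVector G x) (v : Fin n) {Q : Finset (Fin n)}
    (hQ : ∀ Z : Finset (Fin n), #Z ≤ t → ∃ u ∉ Z, ∀ q ∈ Z, q ∈ Q → G.Adj u q) :
    ∑ w ∈ Q.erase v, x w ≤ lam1 G * x v := by
  set σ := ∑ w ∈ Q.erase v, x w with hσ
  set τ := σ / lam1 G
  have hστ : σ = lam1 G * τ := (mul_div_cancel₀ σ hlam.ne').symm
  have hfree : WheelFree t (reattach G v Q) :=
    not_containsCopy_reattach hG.1 (by simpa only [Fintype.card_fin] using hQ)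
  have hnew : 2 * τ * σ + adjForm (G.deleteIncidenceSet v) x ≤
      lam1 G * (x ⬝ᵥ x - x v ^ 2 + τ ^ 2) := by
    rw [hσ, ← neighborFinset_reattach G, ← deleteIncidenceSet_reattach G v Q, ← adjForm_update,
      ← dotProduct_update_self]
    exact (adjForm_le _ _).trans
      (mul_le_mul_of_nonneg_right (hG.2 _ hfree) (sum_nonneg fun i _ => mul_self_nonneg _))
  have hold : lam1 G * (x ⬝ᵥ x) =
      2 * x v * (lam1 G * x v) + adjForm (G.deleteIncidenceSet v) x := by
    rw [← hx.adjForm_eq, ← hx.sum_neighborFinset, ← adjForm_update, Function.update_eq_self]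
  have hsq : τ ^ 2 ≤ x v ^ 2 :=
    le_of_mul_le_mul_left (a := lam1 G) (by rw [hστ] at hnew; linarith) hlam
  rw [hστ]
  exact mul_le_mul_of_nonneg_left ((le_abs_self τ).trans (abs_le_of_sq_le_sq hsq (hx.nonneg v)))
    hlam.le

end Reattach

section BlockGraph

variable {ι : Type*}

/-- The complete bipartite graph with parts `L` and `Lᶜ`, together with a clique on each fibre of
`β` inside `L`. -/
def blockGraph (L : Finset V) (β : V → ι) : SimpleGraph V where
  Adj a b := a ≠ b ∧ (a ∈ L ∨ b ∈ L) ∧ (a ∈ L → b ∈ L → β a = β b)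
  symm := ⟨fun _ _ ⟨hne, hL, hβ⟩ => ⟨hne.symm, hL.symm, fun hb ha => (hβ ha hb).symm⟩⟩
  loopless := ⟨fun _ h => h.1 rfl⟩

lemma blockGraph_adj_of_mem_of_notMem {L : Finset V} {a b : V} (β : V → ι) (ha : a ∈ L)
    (hb : b ∉ L) : (blockGraph L β).Adj a b :=
  ⟨fun h => hb (h ▸ ha), Or.inl ha, fun _ h => absurd h hb⟩

lemma le_card_filter_of_succ_or {p : Fin (2 * k) → Prop} [DecidablePred p]
    (hp : ∀ i j : Fin (2 * k), i.val + 1 = j.val → p i ∨ p j) : k ≤ #{i | p i} := by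
  calc k = #(range k) := (card_range k).symm
    _ ≤ #(({i | p i} : Finset (Fin (2 * k))).image fun i => i.val / 2) := by
      refine card_le_card fun j hj => ?_
      have hj : j < k := mem_range.1 hj
      simp only [mem_image, mem_filter_univ]
      obtain h | h := hp ⟨2 * j, by lia⟩ ⟨2 * j + 1, by lia⟩ rfl
      · exact ⟨_, h, by simp⟩
      · exact ⟨_, h, by simp; lia⟩
    _ ≤ #{i | p i} := card_image_le

lemma not_containsCopy_blockGraph [DecidableEq ι] {L : Finset V} {β : V → ι} (hk : k ≠ 0)
    (hβ : ∀ b, #{a ∈ L | β a = b} ≤ k) :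
    ¬ ContainsCopy (wheelGraph (2 * k + 1)) (blockGraph L β) := by
  rintro ⟨f, hf⟩
  have hhub (i : Fin (2 * k)) : (blockGraph L β).Adj (f 0) (f i.succ) :=
    hf _ _ ⟨(Fin.succ_ne_zero i).symm, Or.inl rfl⟩
  have hrim (i j : Fin (2 * k)) (hij : i.val + 1 = j.val) :
      (blockGraph L β).Adj (f i.succ) (f j.succ) :=
    hf _ _ ⟨by simp [Fin.ext_iff]; lia, by simp; lia⟩
  have hinj : Function.Injective fun i : Fin (2 * k) => f i.succ :=
    f.injective.comp (Fin.succ_injective _)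
  by_cases h0 : f 0 ∈ L
  · have hsub : ({i | f i.succ ∈ L} : Finset (Fin (2 * k))).image (fun i => f i.succ) ⊆
        {a ∈ L | β a = β (f 0)}.erase (f 0) := by
      simp only [subset_iff, mem_image, mem_erase, mem_filter]
      rintro _ ⟨i, ⟨-, hi⟩, rfl⟩
      exact ⟨(hhub i).1.symm, hi, ((hhub i).2.2 h0 hi).symm⟩
    have hcard := card_le_card hsub
    rw [card_image_of_injective _ hinj, card_erase_of_mem (by simp [h0])] at hcard
    have := le_card_filter_of_succ_or fun i j hij => (hrim i j hij).2.1
    have := hβ (β (f 0))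
    lia
  · have hL (i : Fin (2 * k)) : f i.succ ∈ L := (hhub i).2.1.resolve_left h0
    have hconst (m : ℕ) (hm : m < 2 * k) :
        β (f (Fin.succ ⟨m, hm⟩)) = β (f (Fin.succ ⟨0, by lia⟩)) := by
      induction m with
      | zero => rfl
      | succ m ih => rw [← ih (by lia), (hrim ⟨m, by lia⟩ ⟨m + 1, hm⟩ rfl).2.2 (hL _) (hL _)]
    have hsub : univ.image (fun i : Fin (2 * k) => f i.succ) ⊆
        {a ∈ L | β a = β (f (Fin.succ ⟨0, by lia⟩))} := by
      simp only [subset_iff, mem_image, mem_univ, true_and, mem_filter]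
      rintro _ ⟨i, rfl⟩
      exact ⟨hL i, hconst i i.isLt⟩
    have hcard := (card_le_card hsub).trans (hβ _)
    rw [card_image_of_injective _ hinj, card_fin] at hcard
    lia

lemma exists_card_fiber_le (hk : k ≠ 0) (L : Finset V) : ∃ β : V → ℕ,
    (∀ b, #{a ∈ L | β a = b} ≤ k) ∧ #{a ∈ L | #{b ∈ L | β b = β a} < k} < k := by
  induction L using Finset.strongInduction with
  | H L ih =>
    obtain hL | hL := lt_or_ge #L k
    · exact ⟨fun _ => 0, fun b => (card_filter_le _ _).trans hL.le,
        (card_filter_le _ _).trans_lt hL⟩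
    obtain ⟨T, hTL, hT⟩ := exists_subset_card_eq hL
    have hTne : T.Nonempty := card_pos.1 (by lia)
    obtain ⟨β, hβ, hβk⟩ := ih (L \ T) (sdiff_ssubset hTL hTne)
    set γ : V → ℕ := fun a => if a ∈ T then 0 else β a + 1
    have hzero : {a ∈ L | γ a = 0} = T := by grind
    have hsucc (b : ℕ) : {a ∈ L | γ a = b + 1} = {a ∈ L \ T | β a = b} := by grind
    refine ⟨γ, fun b => ?_, ?_⟩
    · cases b with
      | zero => rw [hzero, hT]
      | succ b => rw [hsucc]; exact hβ b
    · refine (card_le_card fun a ha => ?_).trans_lt hβk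
      obtain ⟨haL, ha⟩ := mem_filter.1 ha
      have haT : a ∉ T := fun h => by
        rw [show γ a = 0 from if_pos h, hzero] at ha
        exact ha.ne hT
      rw [show γ a = β a + 1 from if_neg haT, hsucc] at ha
      exact mem_filter.2 ⟨mem_sdiff.2 ⟨haL, haT⟩, ha⟩

lemma degIn_blockGraph [DecidableEq ι] {L : Finset (Fin n)} {β : Fin n → ι} {a : Fin n}
    (ha : a ∈ L) : degIn (blockGraph L β) L a = #{b ∈ L | β b = β a} - 1 := by
  rw [← card_erase_of_mem (a := a) (by simp [ha])]
  refine congrArg card (ext fun b => ?_)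
  simp only [mem_filter, mem_erase, blockGraph, ha, true_or, true_imp_iff, true_and,
    ne_comm (a := a), eq_comm (a := β a)]
  tauto

lemma exists_wheelFree_blockGraph (hk : k ≠ 0) (L : Finset (Fin n)) : ∃ β : Fin n → ℕ,
    WheelFree (2 * k + 1) (blockGraph L β) ∧
      #L * (k - 1) ≤ ∑ a ∈ L, degIn (blockGraph L β) L a + k * (k - 1) := by
  obtain ⟨β, hβ, hβk⟩ := exists_card_fiber_le hk L
  refine ⟨β, not_containsCopy_blockGraph hk hβ, ?_⟩
  have hsplit := card_filter_add_card_filter_not (s := L) fun a => #{b ∈ L | β b = β a} < k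
  have hfull : #{a ∈ L | ¬ #{b ∈ L | β b = β a} < k} * (k - 1) ≤
      ∑ a ∈ L, degIn (blockGraph L β) L a := by
    refine (card_nsmul_le_sum _ _ _ fun a ha => ?_).trans
      (sum_le_sum_of_subset (filter_subset _ L))
    obtain ⟨haL, ha⟩ := mem_filter.1 ha
    rw [degIn_blockGraph haL]
    lia
  calc #L * (k - 1) ≤ (#{a ∈ L | ¬ #{b ∈ L | β b = β a} < k} + k) * (k - 1) := by gcongr; lia
    _ ≤ _ := by rw [add_mul]; gcongr

end BlockGraph

section MaxCut

variable {G : SimpleGraph (Fin n)} {A L R : Finset (Fin n)} {v : Fin n}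

lemma sum_degIn_comm (G : SimpleGraph (Fin n)) (A B : Finset (Fin n)) :
    ∑ a ∈ A, degIn G B a = ∑ b ∈ B, degIn G A b := by
  simpa only [degIn, bipartiteAbove, bipartiteBelow, G.adj_comm] using
    sum_card_bipartiteAbove_eq_sum_card_bipartiteBelow (s := A) (t := B) G.Adj

lemma degIn_add_degIn_compl (G : SimpleGraph (Fin n)) (hv : v ∉ A) :
    degIn G A v + degIn Gᶜ A v = #A := by
  rw [← card_filter_add_card_filter_not (G.Adj v)]
  refine congrArg (_ + ·) (congrArg card (ext fun u => ?_))
  simp only [SimpleGraph.compl_adj, mem_filter]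
  grind

lemma card_neighborFinset_eq_degIn_add (G : SimpleGraph (Fin n)) (A : Finset (Fin n)) (v : Fin n) :
    #(G.neighborFinset v) = degIn G A v + degIn G Aᶜ v := by
  rw [← card_filter_add_card_filter_not (· ∈ A)]
  congr 2 <;> ext u <;> simp [and_comm]

lemma cutCount_eq_sum_degIn (G : SimpleGraph (Fin n)) (S : Finset (Fin n)) :
    cutCount G S = ∑ a ∈ S, degIn G Sᶜ a := by
  simp only [degIn]
  rw [← card_sigma]
  refine card_nbij' (fun p => ⟨p.1, p.2⟩) (fun p => (p.1, p.2)) ?_ ?_ (fun _ _ => rfl)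
    (fun _ _ => rfl) <;> simp [Set.MapsTo] <;> tauto

lemma cutCount_compl (G : SimpleGraph (Fin n)) (S : Finset (Fin n)) :
    cutCount G Sᶜ = cutCount G S := by
  rw [cutCount_eq_sum_degIn, cutCount_eq_sum_degIn, compl_compl, sum_degIn_comm]

lemma IsMaxCut.symm (h : IsMaxCut G L R) : IsMaxCut G R L := by
  obtain ⟨rfl, h⟩ := h
  exact ⟨(compl_compl L).symm, fun S => (h S).trans_eq (cutCount_compl G L).symm⟩

lemma degIn_insert (hv : v ∉ A) (a : Fin n) :
    degIn G (insert v A) a = degIn G A a + if G.Adj a v then 1 else 0 := by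
  simp only [degIn, filter_insert]
  split_ifs
  · exact card_insert_of_notMem fun h => hv (mem_filter.1 h).1
  · rfl

lemma IsMaxCut.degIn_le (h : IsMaxCut G L R) (hv : v ∈ L) : degIn G L v ≤ degIn G R v := by
  obtain ⟨rfl, hmax⟩ := h
  have hmove := hmax (L.erase v)
  have hLv : ∑ a ∈ L.erase v, (if G.Adj a v then 1 else 0) = degIn G L v := by
    rw [degIn, card_filter, ← add_sum_erase L _ hv]
    simp [G.adj_comm v]
  rw [cutCount_eq_sum_degIn, cutCount_eq_sum_degIn, compl_erase,
    sum_congr rfl fun a _ => degIn_insert (notMem_compl.2 hv) a, sum_add_distrib, hLv,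
    ← add_sum_erase L _ hv] at hmove
  lia

end MaxCut

section RoughCut

variable {G : SimpleGraph (Fin n)} {L R A B : Finset (Fin n)} {v : Fin n} {θ : ℝ}

lemma degIn_mono (h : A ⊆ B) (v : Fin n) : degIn G A v ≤ degIn G B v :=
  card_le_card (filter_subset_filter _ h)

lemma two_mul_cutCount_le_lam1_mul (G : SimpleGraph (Fin n)) (L : Finset (Fin n)) :
    2 * (cutCount G L : ℝ) ≤ lam1 G * n := by
  have hdeg : 2 * cutCount G L ≤ ∑ a, #(G.neighborFinset a) := by
    rw [two_mul, ← sum_add_sum_compl L]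
    nth_rw 2 [← cutCount_compl]
    simp only [cutCount_eq_sum_degIn, card_neighborFinset_eq_degIn_add G L, compl_compl]
    gcongr <;> lia
  calc 2 * (cutCount G L : ℝ) ≤ adjForm G 1 := by
        simp only [adjForm_eq_sum, Pi.one_apply, mul_one, sum_boole,
          ← SimpleGraph.neighborFinset_eq_filter]
        exact_mod_cast hdeg
    _ ≤ lam1 G * n := by simpa using adjForm_le G 1

lemma cutCount_blockGraph {ι : Type*} (L : Finset (Fin n)) (β : Fin n → ι) :
    cutCount (blockGraph L β) L = #L * #Lᶜ := by
  rw [cutCount_eq_sum_degIn, ← smul_eq_mul, ← sum_const]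
  exact sum_congr rfl fun a ha => congrArg card (filter_true_of_mem fun b hb =>
    blockGraph_adj_of_mem_of_notMem β ha (mem_compl.1 hb))

lemma IsSpexWheel.le_lam1 [NeZero n] (hG : IsSpexWheel (2 * k + 1) G) (hk : k ≠ 0) :
    ((n : ℝ) - 1) / 2 ≤ lam1 G := by
  set L : Finset (Fin n) := {i | i.val < n / 2}
  have hfree : WheelFree (2 * k + 1) (blockGraph L id) :=
    not_containsCopy_blockGraph hk fun b => (card_le_one.2 (by grind)).trans
      (Nat.one_le_iff_ne_zero.2 hk)
  have hL : #L = n / 2 := by rw [Fin.card_filter_val_lt]; lia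
  have hn : (0 : ℝ) < n := Nat.cast_pos.2 (NeZero.pos n)
  have hcut := two_mul_cutCount_le_lam1_mul (blockGraph L id) L
  have hprod : n ^ 2 ≤ 4 * (n / 2 * (n - n / 2)) + n := by
    obtain ⟨m, hm | hm⟩ := n.even_or_odd'
    · rw [show n / 2 = m by lia, show n - m = m by lia, hm]; nlinarith
    · rw [show n / 2 = m by lia, show n - m = m + 1 by lia, hm]; nlinarith
  rw [cutCount_blockGraph, card_compl, Fintype.card_fin, hL] at hcut
  refine le_of_mul_le_mul_right (a := (n : ℝ)) ?_ hn
  calc ((n : ℝ) - 1) / 2 * n ≤ 2 * (n / 2 * (n - n / 2) : ℕ) := by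
        have : (n : ℝ) ^ 2 ≤ 4 * (n / 2 * (n - n / 2) : ℕ) + n := by exact_mod_cast hprod
        linarith
    _ ≤ lam1 (blockGraph L id) * n := by exact_mod_cast hcut
    _ ≤ lam1 G * n := by gcongr; exact hG.2 _ hfree

lemma IsPerronVector.exists_sq_lam1_le {x : Fin n → ℝ} (hx : IsPerronVector G x) :
    ∃ u, lam1 G ^ 2 ≤ ∑ v ∈ G.neighborFinset u, (degIn G (G.neighborFinset u) v : ℝ) +
      cutCount G (G.neighborFinset u) := by
  obtain ⟨u, hu⟩ := hx.exists_eq_one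
  refine ⟨u, ?_⟩
  calc lam1 G ^ 2 = ∑ v ∈ G.neighborFinset u, lam1 G * x v := by
        rw [← mul_sum, hx.sum_neighborFinset, hu]; ring
    _ ≤ ∑ v ∈ G.neighborFinset u, (#(G.neighborFinset v) : ℝ) := by
        refine sum_le_sum fun v _ => ?_
        rw [← hx.sum_neighborFinset, ← nsmul_one]
        exact sum_le_card_nsmul _ _ _ fun w _ => hx.le_one w
    _ = _ := by
        simp only [cutCount_eq_sum_degIn, card_neighborFinset_eq_degIn_add G (G.neighborFinset u)]
        push_cast
        rw [sum_add_distrib]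

lemma eventually_le_cutCount (hk : k ≠ 0) {ε : ℝ} (hε : 0 < ε) :
    ∀ᶠ n : ℕ in atTop, ∀ G : SimpleGraph (Fin n), IsSpexWheel (2 * k + 1) G →
      ∀ L R : Finset (Fin n), IsMaxCut G L R → (1 / 4 - ε) * (n : ℝ) ^ 2 ≤ cutCount G L := by
  have hN := (tendsto_natCast_atTop_atTop (R := ℝ)).eventually_ge_atTop
  filter_upwards [eventually_sum_degIn_neighborFinset_le hk (half_pos hε), hN (1 / ε),
    eventually_ge_atTop 1] with n hnbr hnε hn G hG L R hcut
  have : NeZero n := ⟨by lia⟩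
  obtain ⟨x, hx⟩ := exists_isPerronVector G
  obtain ⟨u, hu⟩ := hx.exists_sq_lam1_le
  have hmax : (cutCount G (G.neighborFinset u) : ℝ) ≤ cutCount G L := by exact_mod_cast hcut.2 _
  have hn' : (1 : ℝ) ≤ n := by exact_mod_cast hn
  have hlam : (((n : ℝ) - 1) / 2) ^ 2 ≤ lam1 G ^ 2 :=
    pow_le_pow_left₀ (by linarith) (hG.le_lam1 hk) 2
  have hsum := hnbr G hG.1 u
  rw [div_le_iff₀ hε] at hnε
  nlinarith

lemma sum_degIn_compl_add_cutCount (G : SimpleGraph (Fin n)) (L : Finset (Fin n)) :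
    ∑ v ∈ L, degIn Gᶜ Lᶜ v + cutCount G L = #L * #Lᶜ := by
  rw [cutCount_eq_sum_degIn, ← sum_add_distrib, ← smul_eq_mul, ← sum_const]
  refine sum_congr rfl fun v hv => ?_
  rw [add_comm, degIn_add_degIn_compl G (notMem_compl.2 hv)]

lemma degIn_mul_degIn_compl_le (G : SimpleGraph (Fin n)) (L : Finset (Fin n)) (v : Fin n) :
    degIn G L v * degIn G Lᶜ v ≤
      ∑ y ∈ G.neighborFinset v, degIn G (G.neighborFinset v) y + ∑ y ∈ L, degIn Gᶜ Lᶜ y := by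
  set A := {u ∈ L | G.Adj v u}
  set B := {u ∈ Lᶜ | G.Adj v u}
  have hA : A ⊆ G.neighborFinset v := fun u hu => by simpa using (mem_filter.1 hu).2
  have hB : B ⊆ G.neighborFinset v := fun u hu => by simpa using (mem_filter.1 hu).2
  calc degIn G L v * degIn G Lᶜ v = ∑ _ ∈ A, #B := by rw [sum_const, smul_eq_mul]; rfl
    _ = ∑ y ∈ A, degIn G B y + ∑ y ∈ A, degIn Gᶜ B y := by
        rw [← sum_add_distrib]
        refine sum_congr rfl fun y hy => (degIn_add_degIn_compl G fun hyB => ?_).symm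
        exact mem_compl.1 (mem_filter.1 hyB).1 (mem_filter.1 hy).1
    _ ≤ _ := add_le_add
        ((sum_le_sum fun y _ => degIn_mono hB y).trans (sum_le_sum_of_subset hA))
        ((sum_le_sum fun y _ => degIn_mono (filter_subset _ _) y).trans
          (sum_le_sum_of_subset (filter_subset _ _)))

/-- `(L, R)` is a partition for which `G` is close, on average, to a balanced complete bipartite
graph; `θ` measures the error. -/
structure IsRoughCut (G : SimpleGraph (Fin n)) (θ : ℝ) (L R : Finset (Fin n)) : Prop where
  eq_compl : R = Lᶜ
  abs_card_sub_le : |(#L : ℝ) - n / 2| ≤ θ * n / 2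
  sum_degIn_compl_le : ∑ v ∈ L, (degIn Gᶜ R v : ℝ) ≤ θ ^ 2 * n ^ 2 / 4
  degIn_left_lt : ∀ v ∈ L, degIn G L v < θ * n
  degIn_right_lt : ∀ v ∈ R, degIn G R v < θ * n

lemma card_compl_sub (L : Finset (Fin n)) : (#Lᶜ : ℝ) - n / 2 = -((#L : ℝ) - n / 2) := by
  have : (#L : ℝ) + #Lᶜ = n := by exact_mod_cast (card_add_card_compl L).trans (Fintype.card_fin n)
  linarith

lemma IsRoughCut.symm (h : IsRoughCut G θ L R) : IsRoughCut G θ R L where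
  eq_compl := by rw [h.eq_compl, compl_compl]
  abs_card_sub_le := by
    rw [h.eq_compl, card_compl_sub, abs_neg]
    exact h.abs_card_sub_le
  sum_degIn_compl_le := by
    have := sum_degIn_comm Gᶜ L R
    exact (by exact_mod_cast this.symm :
      ∑ v ∈ R, (degIn Gᶜ L v : ℝ) = ∑ v ∈ L, (degIn Gᶜ R v : ℝ)).trans_le h.sum_degIn_compl_le
  degIn_left_lt := h.degIn_right_lt
  degIn_right_lt := h.degIn_left_lt

lemma sq_card_sub_add_sum_degIn_compl (G : SimpleGraph (Fin n)) (L : Finset (Fin n)) :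
    ((#L : ℝ) - n / 2) ^ 2 + ∑ v ∈ L, (degIn Gᶜ Lᶜ v : ℝ) = n ^ 2 / 4 - cutCount G L := by
  have hmul : ∑ v ∈ L, (degIn Gᶜ Lᶜ v : ℝ) + cutCount G L = #L * #Lᶜ := by
    exact_mod_cast sum_degIn_compl_add_cutCount G L
  linear_combination hmul + #L * card_compl_sub L

lemma eventually_isRoughCut (hk : k ≠ 0) (hθ : 0 < θ) :
    ∀ᶠ n : ℕ in atTop, ∀ G : SimpleGraph (Fin n), IsSpexWheel (2 * k + 1) G →
      ∀ L R : Finset (Fin n), IsMaxCut G L R → IsRoughCut G θ L R := by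
  filter_upwards [eventually_sum_degIn_neighborFinset_le hk (ε := θ ^ 2 / 4) (by positivity),
    eventually_le_cutCount hk (ε := θ ^ 2 / 4) (by positivity), eventually_gt_atTop 0]
    with n hnbr hcutn hn G hG
  have hθn : 0 < θ * n := by positivity
  have hsum (L R : Finset (Fin n)) (hcut : IsMaxCut G L R) :
      ((#L : ℝ) - n / 2) ^ 2 + ∑ v ∈ L, (degIn Gᶜ Lᶜ v : ℝ) ≤ θ ^ 2 * n ^ 2 / 4 := by
    linarith [hcutn G hG L R hcut, sq_card_sub_add_sum_degIn_compl G L]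
  have hdeg (L R : Finset (Fin n)) (hcut : IsMaxCut G L R) (v : Fin n) (hv : v ∈ L) :
      degIn G L v < θ * n := by
    refine lt_of_pow_lt_pow_left₀ 2 hθn.le ?_
    have hle : (degIn G L v : ℝ) ≤ degIn G Lᶜ v := by exact_mod_cast hcut.1 ▸ hcut.degIn_le hv
    have hmul : (degIn G L v : ℝ) * degIn G Lᶜ v ≤
        ∑ y ∈ G.neighborFinset v, (degIn G (G.neighborFinset v) y : ℝ) +
          ∑ y ∈ L, (degIn Gᶜ Lᶜ y : ℝ) := by exact_mod_cast degIn_mul_degIn_compl_le G L v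
    nlinarith [hnbr G hG.1 v, hsum L R hcut, sq_nonneg ((#L : ℝ) - n / 2),
      mul_le_mul_of_nonneg_left hle (Nat.cast_nonneg (degIn G L v))]
  intro L R hcut
  have hL := hsum L R hcut
  have hnonneg : (0 : ℝ) ≤ ∑ v ∈ L, (degIn Gᶜ Lᶜ v : ℝ) := by positivity
  exact ⟨hcut.1, abs_le_of_sq_le_sq (by nlinarith) (by positivity),
    hcut.1 ▸ by linarith [sq_nonneg ((#L : ℝ) - n / 2)], hdeg L R hcut, hdeg R L hcut.symm⟩

end RoughCut

section CommonNeighbors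

variable {G : SimpleGraph (Fin n)} {A F L P R Z : Finset (Fin n)} {v : Fin n}

/-- The common neighbours in `P` of the vertices of `F`. -/
noncomputable def commonNbrs (G : SimpleGraph (Fin n)) (F P : Finset (Fin n)) : Finset (Fin n) :=
  {u ∈ P | ∀ q ∈ F, G.Adj q u}

lemma commonNbrs_subset (G : SimpleGraph (Fin n)) (F P : Finset (Fin n)) : commonNbrs G F P ⊆ P :=
  filter_subset _ _

lemma adj_of_mem_commonNbrs {u q : Fin n} (hu : u ∈ commonNbrs G F P) (hq : q ∈ F) : G.Adj q u :=
  (mem_filter.1 hu).2 q hq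

lemma card_sdiff_commonNbrs_le (G : SimpleGraph (Fin n)) (hFP : Disjoint F P) :
    #(P \ commonNbrs G F P) ≤ ∑ q ∈ F, degIn Gᶜ P q := by
  refine (card_le_card (t := F.biUnion fun q => {u ∈ P | Gᶜ.Adj q u}) fun u hu => ?_).trans
    (card_biUnion_le.trans_eq (sum_congr rfl fun q _ => by rw [degIn]; congr))
  obtain ⟨huP, hu⟩ := mem_sdiff.1 hu
  obtain ⟨q, hq, hqu⟩ : ∃ q ∈ F, ¬ G.Adj q u := by
    by_contra! h
    exact hu (mem_filter.2 ⟨huP, h⟩)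
  exact mem_biUnion.2 ⟨q, hq, mem_filter.2 ⟨huP, fun h => disjoint_left.1 hFP hq (h ▸ huP), hqu⟩⟩

lemma card_sdiff_commonNbrs_le_mul {c : ℝ} (hFP : Disjoint F P)
    (hF : ∀ q ∈ F, degIn Gᶜ P q ≤ c) : (#(P \ commonNbrs G F P) : ℝ) ≤ #F * c := by
  rw [← nsmul_eq_mul]
  refine le_trans ?_ (sum_le_card_nsmul F _ _ hF)
  exact_mod_cast card_sdiff_commonNbrs_le G hFP

lemma card_le_card_commonNbrs_add {c : ℝ} (hFP : Disjoint F P) (hF : ∀ q ∈ F, degIn Gᶜ P q ≤ c) :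
    (#P : ℝ) ≤ #(commonNbrs G F P) + #F * c := by
  rw [← card_sdiff_add_card_eq_card (commonNbrs_subset G F P), Nat.cast_add, add_comm]
  gcongr
  exact card_sdiff_commonNbrs_le_mul hFP hF

lemma exists_notMem_forall_adj {c : ℝ} (hc : 0 ≤ c) (hP : #Z * (c + 1) < #P) :
    ∃ u ∉ Z, ∀ q ∈ Z, q ∉ P → degIn Gᶜ P q ≤ c → G.Adj u q := by
  set F : Finset (Fin n) := {q ∈ Z | q ∉ P ∧ degIn Gᶜ P q ≤ c}
  have hFP : Disjoint F P := disjoint_left.2 fun q hq => (mem_filter.1 hq).2.1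
  have hcommon := card_le_card_commonNbrs_add hFP fun q hq => (mem_filter.1 hq).2.2
  have hcard : #Z < #(commonNbrs G F P) := by
    have hFZ : (#F : ℝ) ≤ #Z := by exact_mod_cast card_filter_le _ _
    have : (#Z : ℝ) < #(commonNbrs G F P) := by nlinarith
    exact_mod_cast this
  obtain ⟨u, hu, huZ⟩ := exists_mem_notMem_of_card_lt_card hcard
  exact ⟨u, huZ, fun q hq hqP hqc =>
    (adj_of_mem_commonNbrs hu (mem_filter.2 ⟨hq, hqP, hqc⟩)).symm⟩

/-- The closed neighbourhood of `v` in `G[A]`, for `v ∈ A`. -/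
noncomputable def closedNbrsIn (G : SimpleGraph (Fin n)) (A : Finset (Fin n)) (v : Fin n) :
    Finset (Fin n) :=
  insert v {u ∈ A | G.Adj v u}

lemma closedNbrsIn_subset (hv : v ∈ A) : closedNbrsIn G A v ⊆ A :=
  insert_subset hv (filter_subset _ _)

lemma card_closedNbrsIn (G : SimpleGraph (Fin n)) (A : Finset (Fin n)) (v : Fin n) :
    #(closedNbrsIn G A v) = degIn G A v + 1 :=
  card_insert_of_notMem fun h => G.irrefl (mem_filter.1 h).2

lemma mem_closedNbrsIn_comm {u : Fin n} (hu : u ∈ A) (hv : v ∈ A) :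
    u ∈ closedNbrsIn G A v ↔ v ∈ closedNbrsIn G A u := by
  simp [closedNbrsIn, hu, hv, G.adj_comm, eq_comm]

lemma exists_subset_commonNbrs_closedNbrsIn (hAL : A ⊆ L) (hFR : F ⊆ R) (hLR : Disjoint L R)
    (hdeg : ∀ v ∈ L, degIn G L v < k) (hcard : (∑ q ∈ F, degIn Gᶜ L q) * k < #A) :
    ∃ v ∈ A, F ⊆ commonNbrs G (closedNbrsIn G L v) R := by
  set M := L \ commonNbrs G F L
  have hM : #M ≤ ∑ q ∈ F, degIn Gᶜ L q :=
    card_sdiff_commonNbrs_le G (disjoint_of_subset_left hFR hLR.symm)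
  have hK : #(M.biUnion (closedNbrsIn G L)) < #A := by
    refine (card_biUnion_le_card_mul _ _ k fun m hm => ?_).trans_lt (hcard.trans_le' (by gcongr))
    exact (card_closedNbrsIn G L m).trans_le (hdeg m (mem_sdiff.1 hm).1)
  obtain ⟨v, hvA, hvK⟩ := exists_mem_notMem_of_card_lt_card hK
  refine ⟨v, hvA, fun q hq => mem_filter.2 ⟨hFR hq, fun u hu => ?_⟩⟩
  have huL := closedNbrsIn_subset (hAL hvA) hu
  have huM : u ∉ M := fun huM =>
    hvK (mem_biUnion.2 ⟨u, huM, (mem_closedNbrsIn_comm huL (hAL hvA)).1 hu⟩)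
  have hucommon : u ∈ commonNbrs G F L := by simpa [M, huL] using huM
  exact (adj_of_mem_commonNbrs hucommon hq).symm

end CommonNeighbors

section InternalEdges

variable {G : SimpleGraph (Fin n)} {C L R : Finset (Fin n)} {v : Fin n}

lemma edgeCount_induce_le_one (h : ∀ p ∈ C, ∀ q ∈ C, ∀ r ∈ C, ∀ s ∈ C, G.Adj p q → G.Adj r s →
    s(p, q) = s(r, s)) : edgeCount (G.induce (C : Set (Fin n))) ≤ 1 := by
  refine card_le_one.2 fun e he f hf => ?_
  induction e with | _ p q
  induction f with | _ r s
  refine Sym2.map.injective Subtype.val_injective ?_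
  exact h p p.2 q q.2 r r.2 s s.2 (by simpa using he) (by simpa using hf)

lemma eq_of_edgeCount_induce_le_one {p q r s : Fin n}
    (h : edgeCount (G.induce (C : Set (Fin n))) ≤ 1) (hp : p ∈ C) (hq : q ∈ C) (hr : r ∈ C)
    (hs : s ∈ C) (hpq : G.Adj p q) (hrs : G.Adj r s) : s(p, q) = s(r, s) := by
  have := card_le_one.1 h s(⟨p, hp⟩, ⟨q, hq⟩) (by simpa using hpq) s(⟨r, hr⟩, ⟨s, hs⟩)
    (by simpa using hrs)
  simpa using congrArg (Sym2.map Subtype.val) this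

lemma sum_degIn_self_eq_two_mul_edgeCount (G : SimpleGraph (Fin n)) (C : Finset (Fin n)) :
    ∑ v ∈ C, degIn G C v = 2 * edgeCount (G.induce (C : Set (Fin n))) := by
  rw [edgeCount, ← SimpleGraph.sum_degrees_eq_twice_card_edges, ← sum_coe_sort]
  refine sum_congr rfl fun v _ => ?_
  rw [← SimpleGraph.card_neighborFinset_eq_degree, ← card_map (.subtype _), degIn]
  congr 1
  ext u
  simp [and_comm]

lemma sum_degIn_self_le (hCR : C ⊆ R) (hR : ∀ v ∈ R, degIn G R v ≤ k) :
    ∑ v ∈ R, degIn G R v ≤ ∑ v ∈ C, degIn G C v + 2 * (#(R \ C) * k) := by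
  have hsplit (v : Fin n) : degIn G R v = degIn G (R \ C) v + degIn G C v := by
    simp only [degIn]
    rw [← card_union_of_disjoint (disjoint_filter_filter sdiff_disjoint), ← filter_union,
      sdiff_union_of_subset hCR]
  have hD : ∑ v ∈ R \ C, degIn G R v ≤ #(R \ C) * k :=
    sum_le_card_nsmul _ _ _ fun v hv => hR v (mem_sdiff.1 hv).1
  calc ∑ v ∈ R, degIn G R v
      = ∑ v ∈ R \ C, degIn G R v + (∑ v ∈ C, degIn G (R \ C) v + ∑ v ∈ C, degIn G C v) := by
        rw [← sum_sdiff hCR, ← sum_add_distrib, sum_congr rfl fun v (_ : v ∈ C) => hsplit v]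
    _ = ∑ v ∈ R \ C, degIn G R v + (∑ v ∈ R \ C, degIn G C v + ∑ v ∈ C, degIn G C v) := by
        rw [sum_degIn_comm G C]
    _ ≤ #(R \ C) * k + (#(R \ C) * k + ∑ v ∈ C, degIn G C v) := by
        gcongr
        exact (sum_le_sum fun v _ => degIn_mono hCR v).trans hD
    _ = _ := by ring

lemma sum_degIn_add_card_le (hL : ∀ v ∈ L, degIn G L v < k) :
    ∑ v ∈ L, degIn G L v + #L ≤ #L * (k - 1) + #{v ∈ L | degIn G L v = k - 1} := by
  rw [card_eq_sum_ones, card_filter, sum_mul, ← sum_add_distrib, ← sum_add_distrib]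
  refine sum_le_sum fun v hv => ?_
  have := hL v hv
  split_ifs <;> lia

lemma WheelFree.degIn_lt (hG : WheelFree (2 * k + 1) G) (hk : k ≠ 0) (hv : v ∈ L)
    (hcommon : ∀ F ⊆ L, #F ≤ k + 1 → k ≤ #(commonNbrs G F R)) : degIn G L v < k := by
  by_contra! hdeg
  obtain ⟨T, hT, hTk⟩ := exists_subset_card_eq hdeg
  have hvT : insert v T ⊆ L := insert_subset hv (hT.trans (filter_subset _ _))
  have hC := hcommon _ hvT ((card_insert_le _ _).trans_eq (by rw [hTk]))
  refine hG (containsCopy_wheelGraph_of_biclique (v := v) hk hTk.ge hC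
    (fun t ht c hc => adj_of_mem_commonNbrs hc (mem_insert_of_mem ht)) fun c hc => ?_)
  rcases mem_union.1 hc with hc | hc
  · exact (mem_filter.1 (hT hc)).2
  · exact adj_of_mem_commonNbrs hc (mem_insert_self v T)

lemma WheelFree.edgeCount_induce_commonNbrs_le_one (hG : WheelFree (2 * k + 1) G) (hk : 3 ≤ k)
    (hdeg : k ≤ degIn G L v + 1) (hC : k + 1 ≤ #(commonNbrs G (closedNbrsIn G L v) R)) :
    edgeCount (G.induce (commonNbrs G (closedNbrsIn G L v) R : Set (Fin n))) ≤ 1 := by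
  refine edgeCount_induce_le_one fun p hp q hq r hr s hs hpq hrs => ?_
  by_contra hne
  refine hG (containsCopy_wheelGraph_of_two_edges (v := v) hk hdeg hC
    (fun t ht c hc => adj_of_mem_commonNbrs hc (mem_insert_of_mem ht)) (fun c hc => ?_)
    hp hq hr hs hpq hrs hne)
  rcases mem_union.1 hc with hc | hc
  · exact (mem_filter.1 hc).2
  · exact adj_of_mem_commonNbrs hc (mem_insert_self v _)

lemma sum_degIn_self_eq_sum_sum (G : SimpleGraph (Fin n)) (A : Finset (Fin n)) :
    (∑ v ∈ A, degIn G A v : ℝ) = ∑ i, ∑ j, if i ∈ A ∧ j ∈ A ∧ G.Adj i j then 1 else 0 := by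
  simp only [degIn, card_filter, Nat.cast_sum, Nat.cast_ite, Nat.cast_one, Nat.cast_zero]
  simp only [ite_and, sum_ite_irrel, sum_const_zero, sum_ite_mem, univ_inter]

lemma adjForm_add_sq_mul_le {H : SimpleGraph (Fin n)} {x : Fin n → ℝ} {c : ℝ} (hc : 0 ≤ c)
    (hxc : ∀ v, c ≤ x v) (hx1 : ∀ v, x v ≤ 1) (hH : ∀ a ∈ L, ∀ b ∈ Lᶜ, H.Adj a b) :
    adjForm G x + c ^ 2 * ∑ v ∈ L, degIn H L v ≤
      adjForm H x + ∑ v ∈ L, degIn G L v + ∑ v ∈ Lᶜ, degIn G Lᶜ v := by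
  simp only [adjForm_eq_sum]
  push_cast
  simp only [sum_degIn_self_eq_sum_sum, mul_sum, ← sum_add_distrib]
  refine sum_le_sum fun i _ => sum_le_sum fun j _ => ?_
  have hlo : c ^ 2 ≤ x i * x j := by
    rw [sq]
    exact mul_le_mul (hxc i) (hxc j) hc (hc.trans (hxc i))
  have hup : x i * x j ≤ 1 := mul_le_one₀ (hx1 i) (hc.trans (hxc j)) (hx1 j)
  have hd : 0 ≤ c ^ 2 := sq_nonneg c
  generalize c ^ 2 = d at *
  generalize x i * x j = y at *
  simp only [mem_compl, mul_ite, mul_one, mul_zero] at *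
  grind [H.adj_comm]

lemma IsSpexWheel.sq_mul_le_sum_degIn {x : Fin n → ℝ} {c : ℝ} (hG : IsSpexWheel (2 * k + 1) G)
    (hk : k ≠ 0) (hx : IsPerronVector G x) (hc : 0 ≤ c) (hxc : ∀ v, c ≤ x v)
    (L : Finset (Fin n)) :
    c ^ 2 * ((#L - k) * (k - 1)) ≤ ∑ v ∈ L, (degIn G L v : ℝ) + ∑ v ∈ Lᶜ, (degIn G Lᶜ v : ℝ) := by
  obtain ⟨β, hfree, hβ⟩ := exists_wheelFree_blockGraph hk L
  have hle : adjForm (blockGraph L β) x ≤ adjForm G x := by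
    rw [hx.adjForm_eq]
    exact (adjForm_le _ x).trans
      (mul_le_mul_of_nonneg_right (hG.2 _ hfree) (sum_nonneg fun i _ => mul_self_nonneg _))
  have hcompare := adjForm_add_sq_mul_le (G := G) (L := L) hc hxc hx.le_one
    fun a ha b hb => blockGraph_adj_of_mem_of_notMem β ha (mem_compl.1 hb)
  have hβ' : ((#L : ℝ) - k) * (k - 1) ≤ ∑ v ∈ L, degIn (blockGraph L β) L v := by
    rw [← Nat.cast_pred (by lia)]
    have : (#L * (k - 1) : ℕ) ≤ ((∑ a ∈ L, degIn (blockGraph L β) L a + k * (k - 1) : ℕ) : ℝ) := by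
      exact_mod_cast hβ
    push_cast at this
    push_cast
    linarith
  have := mul_le_mul_of_nonneg_left hβ' (sq_nonneg c)
  push_cast at *
  linarith

end InternalEdges

section FineCut

variable {G : SimpleGraph (Fin n)} {L R F : Finset (Fin n)} {u v : Fin n} {θ δ : ℝ}
  {x : Fin n → ℝ}

lemma IsRoughCut.card_filter_lt_le (h : IsRoughCut G θ L R) (hθn : 0 < θ * n) :
    (#{q ∈ R | θ * n < degIn Gᶜ L q} : ℝ) ≤ θ * n / 4 := by
  refine le_of_mul_le_mul_right ?_ hθn
  calc (#{q ∈ R | θ * n < degIn Gᶜ L q} : ℝ) * (θ * n)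
      ≤ ∑ q ∈ R with θ * n < degIn Gᶜ L q, (degIn Gᶜ L q : ℝ) := by
        rw [← nsmul_eq_mul]
        exact card_nsmul_le_sum _ _ _ fun q hq => (mem_filter.1 hq).2.le
    _ ≤ ∑ q ∈ R, (degIn Gᶜ L q : ℝ) :=
        sum_le_sum_of_subset_of_nonneg (filter_subset _ R) fun _ _ _ => Nat.cast_nonneg _
    _ ≤ θ * n / 4 * (θ * n) := h.symm.sum_degIn_compl_le.trans_eq (by ring)

lemma IsRoughCut.lam1_mul_le_add_sum (h : IsRoughCut G θ L R) (hx : IsPerronVector G x)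
    (hu : u ∈ L) : lam1 G * x u ≤ θ * n + ∑ w ∈ R, x w := by
  have hsplit : G.neighborFinset u ⊆ {w ∈ L | G.Adj u w} ∪ R := fun w hw => by
    have := (G.mem_neighborFinset u w).1 hw
    rw [h.eq_compl]
    by_cases hwL : w ∈ L <;> simp [hwL, this]
  have hL : ∑ w ∈ L with G.Adj u w, x w ≤ degIn G L u := by
    rw [← nsmul_one (degIn G L u)]
    exact sum_le_card_nsmul _ _ _ fun w _ => hx.le_one w
  have hdisj : Disjoint ({w ∈ L | G.Adj u w}) R :=
    disjoint_of_subset_left (filter_subset _ L) (h.eq_compl ▸ disjoint_compl_right)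
  calc lam1 G * x u = ∑ w ∈ G.neighborFinset u, x w := (hx.sum_neighborFinset u).symm
    _ ≤ ∑ w ∈ {w ∈ L | G.Adj u w} ∪ R, x w :=
        sum_le_sum_of_subset_of_nonneg hsplit fun w _ _ => hx.nonneg w
    _ ≤ θ * n + ∑ w ∈ R, x w := by
        rw [sum_union hdisj]
        linarith [h.degIn_left_lt u hu]

lemma IsRoughCut.lam1_mul_one_sub_le {t : ℕ} (h : IsRoughCut G θ L R) (hG : IsSpexWheel t G)
    (hlam : 0 < lam1 G) (hx : IsPerronVector G x) (hθn : 4 ≤ θ * n)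
    (ht : t * (θ * n + 1) < n / 2 - θ * n / 2) (v : Fin n) :
    lam1 G * (1 - x v) ≤ 3 / 2 * (θ * n) := by
  obtain ⟨u, hu⟩ := hx.exists_eq_one
  wlog huL : u ∈ L generalizing L R
  · exact this h.symm (by simpa [h.eq_compl] using huL)
  set Q : Finset (Fin n) := {q ∈ R | degIn Gᶜ L q ≤ θ * n}
  have hQ (Z : Finset (Fin n)) (hZ : #Z ≤ t) : ∃ u ∉ Z, ∀ q ∈ Z, q ∈ Q → G.Adj u q := by
    have hZt : (#Z : ℝ) ≤ t := by exact_mod_cast hZ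
    obtain ⟨u, huZ, hu⟩ := exists_notMem_forall_adj (G := G) (Z := Z) (P := L) (c := θ * n)
      (by linarith) (by nlinarith [abs_le.1 h.abs_card_sub_le])
    refine ⟨u, huZ, fun q hq hqQ => hu q hq ?_ (mem_filter.1 hqQ).2⟩
    exact mem_compl.1 (h.eq_compl ▸ (mem_filter.1 hqQ).1)
  have hQv : ∑ w ∈ Q, x w ≤ lam1 G * x v + 1 := by
    have hle := hG.sum_erase_le_lam1_mul hlam hx v hQ
    by_cases hv : v ∈ Q
    · linarith [add_sum_erase Q x hv, hx.le_one v]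
    · rw [erase_eq_of_notMem hv] at hle
      linarith
  have hRQ : ∑ w ∈ R, x w ≤ ∑ w ∈ Q, x w + θ * n / 4 := by
    rw [← sum_filter_add_sum_filter_not R fun q => (degIn Gᶜ L q : ℝ) ≤ θ * n]
    simp only [not_le]
    have := sum_le_card_nsmul {q ∈ R | θ * n < degIn Gᶜ L q} x 1 fun w _ => hx.le_one w
    rw [nsmul_one] at this
    linarith [h.card_filter_lt_le (by linarith)]
  have hlamu := h.lam1_mul_le_add_sum hx huL
  rw [hu, mul_one] at hlamu
  linarith

lemma IsRoughCut.degIn_compl_le (h : IsRoughCut G θ L R) (hlam : ((n : ℝ) - 1) / 2 ≤ lam1 G)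
    (hx : IsPerronVector G x) (hθn : 1 ≤ θ * n) (hxv : lam1 G * (1 - x v) ≤ 3 / 2 * (θ * n))
    (hv : v ∈ L) : degIn Gᶜ R v ≤ 4 * θ * n := by
  have hvR : v ∉ R := by simpa [h.eq_compl] using hv
  have hnbr : lam1 G * x v ≤ degIn G L v + degIn G R v := by
    rw [← hx.sum_neighborFinset, h.eq_compl]
    have := sum_le_card_nsmul (G.neighborFinset v) x 1 fun w _ => hx.le_one w
    rw [nsmul_one, card_neighborFinset_eq_degIn_add G L] at this
    exact_mod_cast this
  have hcompl : (degIn G R v + degIn Gᶜ R v : ℝ) = #R := by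
    exact_mod_cast degIn_add_degIn_compl G hvR
  linarith [h.degIn_left_lt v hv, abs_le.1 h.symm.abs_card_sub_le]

/-- `(L, R)` is a partition for which `G` is close, around every vertex, to a balanced complete
bipartite graph; `δ` measures the error. -/
structure IsFineCut (G : SimpleGraph (Fin n)) (δ : ℝ) (L R : Finset (Fin n)) : Prop where
  eq_compl : R = Lᶜ
  abs_card_sub_le : |(#L : ℝ) - n / 2| ≤ δ * n
  degIn_compl_left_le : ∀ v ∈ L, degIn Gᶜ R v ≤ δ * n
  degIn_compl_right_le : ∀ v ∈ R, degIn Gᶜ L v ≤ δ * n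

lemma eventually_isFineCut (hk : k ≠ 0) (hδ : 0 < δ) (hkδ : k * δ ≤ 1 / 10) :
    ∀ᶠ n : ℕ in atTop, ∀ G : SimpleGraph (Fin n), IsSpexWheel (2 * k + 1) G →
      ∀ L R : Finset (Fin n), IsMaxCut G L R →
        IsFineCut G δ L R ∧ ∃ x, IsPerronVector G x ∧ ∀ v, 1 - δ ≤ x v := by
  have hN := (tendsto_natCast_atTop_atTop (R := ℝ)).eventually_ge_atTop
  have hk1 : (1 : ℝ) ≤ k := by exact_mod_cast Nat.one_le_iff_ne_zero.2 hk
  filter_upwards [eventually_isRoughCut hk (θ := δ / 4) (by positivity), hN (16 / δ),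
    hN 4] with n hrough hδn hn G hG L R hcut
  have : NeZero n := ⟨by rintro rfl; norm_num at hn⟩
  rw [div_le_iff₀ hδ] at hδn
  have h := hrough G hG L R hcut
  have hlam := hG.le_lam1 hk
  obtain ⟨x, hx⟩ := exists_isPerronVector G
  have hxv := h.lam1_mul_one_sub_le hG (by linarith) hx (by linarith)
    (by push_cast; nlinarith)
  refine ⟨⟨h.eq_compl, h.abs_card_sub_le.trans (by linarith), fun v hv => ?_, fun v hv => ?_⟩,
    x, hx, fun v => ?_⟩
  · exact (h.degIn_compl_le hlam hx (by linarith) (hxv v) hv).trans_eq (by ring)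
  · exact (h.symm.degIn_compl_le hlam hx (by linarith) (hxv v) hv).trans_eq (by ring)
  · nlinarith [hxv v, hx.le_one v]

lemma IsFineCut.symm (h : IsFineCut G δ L R) : IsFineCut G δ R L where
  eq_compl := by rw [h.eq_compl, compl_compl]
  abs_card_sub_le := by
    rw [h.eq_compl, card_compl_sub, abs_neg]
    exact h.abs_card_sub_le
  degIn_compl_left_le := h.degIn_compl_right_le
  degIn_compl_right_le := h.degIn_compl_left_le

lemma IsFineCut.disjoint_of_subset (h : IsFineCut G δ L R) (hF : F ⊆ L) : Disjoint F R :=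
  disjoint_of_subset_left hF (h.eq_compl ▸ disjoint_compl_right)

lemma IsFineCut.le_card_commonNbrs (h : IsFineCut G δ L R) (hδ : 0 ≤ δ) {m : ℕ} (hF : F ⊆ L)
    (hFm : #F ≤ m) : n / 2 - (m + 1) * (δ * n) ≤ #(commonNbrs G F R) := by
  have hcommon := card_le_card_commonNbrs_add (h.disjoint_of_subset hF)
    fun q hq => h.degIn_compl_left_le q (hF hq)
  have hmul : (#F : ℝ) * (δ * n) ≤ m * (δ * n) := by gcongr
  linarith [abs_le.1 h.symm.abs_card_sub_le]

end FineCut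

section Extremal

variable {G : SimpleGraph (Fin n)} {L R : Finset (Fin n)} {v : Fin n} {δ : ℝ} {x : Fin n → ℝ}

lemma IsFineCut.degIn_lt (h : IsFineCut G δ L R) (hG : WheelFree (2 * k + 1) G) (hk : 3 ≤ k)
    (hδ0 : 0 ≤ δ) (hδ : δ * k ^ 2 ≤ 1 / 100) (hn : 1000 * (k : ℝ) ^ 2 ≤ n) (hv : v ∈ L) :
    degIn G L v < k := by
  have hk3 : (3 : ℝ) ≤ k := by exact_mod_cast hk
  refine hG.degIn_lt (by lia) hv (R := R) fun F hF hFk => ?_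
  have hcommon := h.le_card_commonNbrs hδ0 hF hFk
  push_cast at hcommon
  have : (k : ℝ) ≤ #(commonNbrs G F R) := by
    nlinarith [mul_nonneg hδ0 n.cast_nonneg]
  exact_mod_cast this

lemma IsFineCut.edgeCount_induce_commonNbrs_le_one (h : IsFineCut G δ L R)
    (hG : WheelFree (2 * k + 1) G) (hk : 3 ≤ k) (hδ0 : 0 ≤ δ) (hδ : δ * k ^ 2 ≤ 1 / 100)
    (hn : 1000 * (k : ℝ) ^ 2 ≤ n) (hv : v ∈ L) (hdeg : degIn G L v = k - 1) :
    edgeCount (G.induce (commonNbrs G (closedNbrsIn G L v) R : Set (Fin n))) ≤ 1 := by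
  have hk3 : (3 : ℝ) ≤ k := by exact_mod_cast hk
  refine hG.edgeCount_induce_commonNbrs_le_one hk (by lia) ?_
  have hcard : #(closedNbrsIn G L v) ≤ k := by rw [card_closedNbrsIn]; lia
  have hcommon := h.le_card_commonNbrs hδ0 (closedNbrsIn_subset hv) hcard
  have : (k + 1 : ℝ) ≤ #(commonNbrs G (closedNbrsIn G L v) R) := by
    nlinarith [mul_nonneg hδ0 n.cast_nonneg]
  exact_mod_cast this

lemma IsFineCut.sum_degIn_right_le (h : IsFineCut G δ L R) (hG : WheelFree (2 * k + 1) G)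
    (hk : 3 ≤ k) (hδ0 : 0 ≤ δ) (hδ : δ * k ^ 2 ≤ 1 / 100) (hn : 1000 * (k : ℝ) ^ 2 ≤ n) (hv : v ∈ L)
    (hdeg : degIn G L v = k - 1) : ∑ w ∈ R, (degIn G R w : ℝ) ≤ 2 + n / 50 := by
  set C := commonNbrs G (closedNbrsIn G L v) R
  have hsub : closedNbrsIn G L v ⊆ L := closedNbrsIn_subset hv
  have hRC : (#(R \ C) : ℝ) ≤ k * (δ * n) := by
    have := card_sdiff_commonNbrs_le_mul (h.disjoint_of_subset hsub)
      fun q hq => h.degIn_compl_left_le q (hsub hq)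
    rwa [card_closedNbrsIn, hdeg, Nat.sub_add_cancel (by lia)] at this
  have hsum := sum_degIn_self_le (commonNbrs_subset G (closedNbrsIn G L v) R)
    fun w hw => (h.symm.degIn_lt hG hk hδ0 hδ hn hw).le
  have hC := h.edgeCount_induce_commonNbrs_le_one hG hk hδ0 hδ hn hv hdeg
  rw [sum_degIn_self_eq_two_mul_edgeCount G (commonNbrs _ _ _)] at hsum
  calc ∑ w ∈ R, (degIn G R w : ℝ) ≤ 2 * 1 + 2 * (#(R \ C) * k) := by
        exact_mod_cast hsum.trans (by gcongr)
    _ ≤ 2 * 1 + 2 * (k * (δ * n) * k) := by gcongr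
    _ ≤ 2 + n / 50 := by linarith [mul_le_mul_of_nonneg_left hδ n.cast_nonneg]

lemma IsFineCut.div_four_le_card_filter (h : IsFineCut G δ L R) (hG : IsSpexWheel (2 * k + 1) G)
    (hk : 3 ≤ k) (hδ0 : 0 ≤ δ) (hδ : δ * k ^ 2 ≤ 1 / 100) (hn : 1000 * (k : ℝ) ^ 2 ≤ n)
    (hx : IsPerronVector G x) (hxδ : ∀ v, 1 - δ ≤ x v) (hv : v ∈ L) (hdeg : degIn G L v = k - 1) :
    (n : ℝ) / 4 ≤ #{v ∈ L | degIn G L v = k - 1} := by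
  have hk3 : (3 : ℝ) ≤ k := by exact_mod_cast hk
  have hδk : δ * k ≤ 1 / 300 := by nlinarith
  have hcompare := hG.sq_mul_le_sum_degIn (by lia) hx (c := 1 - δ) (by nlinarith) hxδ L
  have hR := h.sum_degIn_right_le hG.1 hk hδ0 hδ hn hv hdeg
  rw [h.eq_compl] at hR
  have hL : (∑ v ∈ L, degIn G L v : ℝ) + #L ≤
      #L * (k - 1) + #{v ∈ L | degIn G L v = k - 1} := by
    rw [← Nat.cast_pred (by lia)]
    exact_mod_cast sum_degIn_add_card_le fun v hv => h.degIn_lt hG.1 hk hδ0 hδ hn hv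
  have hLn : (#L : ℝ) ≤ n := by exact_mod_cast card_finset_fin_le L
  have hLcard := abs_le.1 h.abs_card_sub_le
  have hloss : (#L : ℝ) * (k - 1) - k ^ 2 - n / 150 ≤ (1 - δ) ^ 2 * ((#L - k) * (k - 1)) := by
    have hLk : 0 ≤ (#L - k : ℝ) := by nlinarith
    have hle : (#L - k : ℝ) * (k - 1) ≤ n * k :=
      mul_le_mul (by linarith) (by linarith) (by linarith) n.cast_nonneg
    calc (#L : ℝ) * (k - 1) - k ^ 2 - n / 150
        ≤ (#L - k) * (k - 1) - 2 * (δ * k) * n := by nlinarith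
      _ ≤ (#L - k) * (k - 1) - 2 * δ * ((#L - k) * (k - 1)) := by
        linarith [mul_le_mul_of_nonneg_left hle hδ0]
      _ ≤ (1 - δ) ^ 2 * ((#L - k) * (k - 1)) := by
        linarith [mul_nonneg (sq_nonneg δ) (mul_nonneg hLk (by linarith : (0 : ℝ) ≤ k - 1))]
  nlinarith

lemma IsFineCut.edgeCount_induce_right_le_one (h : IsFineCut G δ L R)
    (hG : WheelFree (2 * k + 1) G) (hk : 3 ≤ k) (hδ0 : 0 ≤ δ) (hδ : δ * k ^ 2 ≤ 1 / 100)
    (hn : 1000 * (k : ℝ) ^ 2 ≤ n) (hcard : (n : ℝ) / 4 ≤ #{v ∈ L | degIn G L v = k - 1}) :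
    edgeCount (G.induce (R : Set (Fin n))) ≤ 1 := by
  have hk3 : (3 : ℝ) ≤ k := by exact_mod_cast hk
  refine edgeCount_induce_le_one fun p hp q hq r hr s hs hpq hrs => ?_
  set F : Finset (Fin n) := {p, q, r, s}
  have hFR : F ⊆ R := by simp [F, insert_subset_iff, hp, hq, hr, hs]
  have hF : (∑ z ∈ F, (degIn Gᶜ L z : ℝ)) ≤ 4 * (δ * n) := by
    have hF4 : (#F : ℝ) ≤ 4 := by exact_mod_cast card_le_four
    refine (sum_le_card_nsmul F _ _ fun z hz => h.degIn_compl_right_le z (hFR hz)).trans ?_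
    rw [nsmul_eq_mul]
    gcongr
  have hFA : (∑ z ∈ F, degIn Gᶜ L z) * k < #{v ∈ L | degIn G L v = k - 1} := by
    have : (∑ z ∈ F, (degIn Gᶜ L z : ℝ)) * k < #{v ∈ L | degIn G L v = k - 1} := by
      nlinarith
    exact_mod_cast this
  obtain ⟨v, hvA, hFC⟩ := exists_subset_commonNbrs_closedNbrsIn (filter_subset _ L) hFR
    (h.disjoint_of_subset Subset.rfl) (fun v hv => h.degIn_lt hG hk hδ0 hδ hn hv) hFA
  obtain ⟨hv, hdeg⟩ := mem_filter.1 hvA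
  exact eq_of_edgeCount_induce_le_one (h.edgeCount_induce_commonNbrs_le_one hG hk hδ0 hδ hn hv hdeg)
    (hFC (by simp [F])) (hFC (by simp [F])) (hFC (by simp [F])) (hFC (by simp [F])) hpq hrs

end Extremal

theorem many_max_internal_degree_general (k : ℕ) (hk : 3 ≤ k) :
    ∃ N : ℕ, ∀ n : ℕ, N ≤ n → ∀ G : SimpleGraph (Fin n), IsSpexWheel (2 * k + 1) G →
      ∀ L R : Finset (Fin n), IsMaxCut G L R →
        (∃ v ∈ L, degIn G L v = k - 1) →
        4 * k ^ 2 + 1 ≤ {v : Fin n | v ∈ L ∧ degIn G L v = k - 1}.ncard ∧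
        edgeCount (G.induce (R : Set (Fin n))) ≤ 1 := by
  have hk3 : (3 : ℝ) ≤ k := by exact_mod_cast hk
  have hδ0 : 0 < 1 / (100 * (k : ℝ) ^ 2) := by positivity
  have hδ : 1 / (100 * (k : ℝ) ^ 2) * k ^ 2 ≤ 1 / 100 := by field_simp; rfl
  refine eventually_atTop.1 ?_
  filter_upwards [eventually_isFineCut (k := k) (δ := 1 / (100 * (k : ℝ) ^ 2)) (by lia)
    hδ0 (by nlinarith),
    eventually_ge_atTop (1000 * k ^ 2)] with n hfine hn G hG L R hcut ⟨v, hv, hdeg⟩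
  have hn' : 1000 * (k : ℝ) ^ 2 ≤ n := by exact_mod_cast hn
  obtain ⟨h, x, hx, hxδ⟩ := hfine G hG L R hcut
  have hcard := h.div_four_le_card_filter hG hk hδ0.le hδ hn' hx hxδ hv hdeg
  refine ⟨?_, h.edgeCount_induce_right_le_one hG.1 hk hδ0.le hδ hn' hcard⟩
  rw [← coe_filter, Set.ncard_coe_finset]
  have : 4 * (k : ℝ) ^ 2 + 1 ≤ #{v ∈ L | degIn G L v = k - 1} := by nlinarith
  exact_mod_cast this

/-- If `L` has a vertex of internal degree `k - 1`, then it has at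
least `4k² + 1` of them, and `G[R]` has at most one edge. -/
theorem many_max_internal_degree (k : ℕ) (hk : 3 ≤ k) (hk4 : k ≠ 4) (hk5 : k ≠ 5) :
    ∃ N : ℕ, ∀ n : ℕ, N ≤ n → ∀ G : SimpleGraph (Fin n), IsSpexWheel (2 * k + 1) G →
      ∀ L R : Finset (Fin n), IsMaxCut G L R →
        (∃ v ∈ L, degIn G L v = k - 1) →
        4 * k ^ 2 + 1 ≤ {v : Fin n | v ∈ L ∧ degIn G L v = k - 1}.ncard ∧
        edgeCount (G.induce (R : Set (Fin n))) ≤ 1 :=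
  many_max_internal_degree_general k hk
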